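/- For every fixed integer δ ≥ 2 there exists Δ₀ such that for every graph G of minimum degree δ and maximum degree Δ ≥ Δ₀, the inclusion chromatic index of G satisfies χ'_⊂(G) ≤ (1 + 4/(δ−1))·Δ. -/

import Mathlib

/-!
The colours are grouped into *blocks*, each with its own palette, and every vertex `v` owns a set
`A v` of about a proportion `p` of the blocks, in such a way that the owned sets of any few vertices
at mutual distance at most three look independent (`exists_frame`). An edge is first sent to a
block, and the edges of every block are then coloured properly from its palette. If no edge at `v`
is in a block owned by `v`, then an edge at `u` in a block owned by `v` has a colour missing at `v`;
this is how the inclusion of the palette of `u` in that of `v` is avoided. By comparing cardinalities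
it is enough to treat the edges `uv` in one direction, from smaller to larger degree, with ties
broken arbitrarily (`isInclusionFree_of_key`).

Vertices have *high* degree above a threshold of order `log Δ`. Edges between two low vertices use a
separate palette of polylogarithmic size, where the colour of an edge determines its ends locally, so
that a low vertex with another low neighbour is served at once. A high vertex `w` sends its edges to
blocks that it does not own, but these are spread so evenly that for each neighbour `v` some edge at
`w` is in a block owned by `v`. There remain the *ring vertices*: low vertices with at most one low
neighbour, which comes later in the order. Let `L = δ - 1`. The neighbourhood of a ring vertex `u`
is cut into small parts, each carrying `L` cyclic shifts (`exists_ring`). Every neighbour `v` is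
assigned one of its `L` shifts, and the edge from `u` to the image `w` of `v` is required to lie in a
block owned by `v`, while neighbours whose other shifts lead to `w` must not own that block
(`Frame.ok`).

For random shifts and a random admissible block, each edge reaches a given block with probability at
most `Cap / λ`, where `λ` is nearly the number of blocks and `Cap` is the maximum of `(1 - p)⁻²` and
`μ ^ L / (1 - p)` with `μ = max (1 / (L p)) ((1 - 1 / L) / (1 - p))` (`Frame.qbar_le`). Both
random choices are derandomised by Beck–Fiala rounding (`exists_rounding`) at the price of a bounded
error in every load, so each block has maximum degree at most `D`, about `Cap Δ` divided by the
number of blocks, and can be coloured with `D + O(√D)` colours (`exists_coloring_of_slack`). In total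
`(Cap + o(1)) Δ` colours are used. A suitable `p` gives `Cap = 4 < 5` for `δ = 2`,
`Cap = 25 / 9 < 3` for `δ = 3`, and `Cap = (L / (L - 1)) ^ 2 < 1 + 4 / L` for `δ ≥ 4`, where
`p = 1 / L`.
-/

/-- The palette of a vertex `v` under an edge colouring `c` of `G`:
the set of colours appearing on edges incident with `v`. -/
def palette {V : Type*} (G : SimpleGraph V) (c : Sym2 V → ℕ) (v : V) : Set ℕ :=
  {n : ℕ | ∃ u : V, G.Adj v u ∧ c s(v, u) = n}

/-- `c` is a proper edge colouring of `G`: adjacent edges receive distinct colours. -/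
def IsProperEdgeColoring {V : Type*} (G : SimpleGraph V) (c : Sym2 V → ℕ) : Prop :=
  ∀ u v w : V, G.Adj u v → G.Adj u w → v ≠ w → c s(u, v) ≠ c s(u, w)

/-- `c` is an inclusion-free colouring of `G`: a proper edge colouring such that
for every edge `uv`, the palette of `u` is not contained in the palette of `v`. -/
def IsInclusionFree {V : Type*} (G : SimpleGraph V) (c : Sym2 V → ℕ) : Prop :=
  IsProperEdgeColoring G c ∧ ∀ u v : V, G.Adj u v → ¬ palette G c u ⊆ palette G c v

/-- The inclusion chromatic index: the least number of colours admitting an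
inclusion-free colouring of `G`. -/
noncomputable def inclusionChromaticIndex {V : Type*} (G : SimpleGraph V) : ℕ :=
  sInf {k : ℕ | ∃ c : Sym2 V → ℕ, IsInclusionFree G c ∧ ∀ e ∈ G.edgeSet, c e < k}

/-! ### Edge colouring with slack -/

/-- `n` is one of the `k` colours, and no edge of `H` at `v` carries it. -/
def IsMissing {V : Type*} (H : SimpleGraph V) (c : Sym2 V → ℕ) (k : ℕ) (v : V) (n : ℕ) : Prop :=
  n < k ∧ ∀ u, H.Adj v u → c s(v, u) ≠ n

/-- `c` is a proper edge colouring of `H` with colours below `k`. -/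
def IsColoring {V : Type*} (H : SimpleGraph V) (c : Sym2 V → ℕ) (k : ℕ) : Prop :=
  IsProperEdgeColoring H c ∧ ∀ u v, H.Adj u v → c s(u, v) < k

/-- `G` with the single edge `xz` removed. -/
def delEdge {V : Type*} (G : SimpleGraph V) (x z : V) : SimpleGraph V :=
  G.deleteEdges {s(x, z)}

lemma delEdge_adj {V : Type*} {G : SimpleGraph V} {x z u v : V} :
    (delEdge G x z).Adj u v ↔ G.Adj u v ∧ s(u, v) ≠ s(x, z) := by
  simp [delEdge, SimpleGraph.deleteEdges_adj]

lemma extend_of_common_missing {V : Type*} {G : SimpleGraph V} {x z : V} {k : ℕ}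
    {c : Sym2 V → ℕ} (hc : IsColoring (delEdge G x z) c k) {β : ℕ}
    (hx : IsMissing (delEdge G x z) c k x β) (hz : IsMissing (delEdge G x z) c k z β) :
    ∃ c', IsColoring G c' k := by
  classical
  refine ⟨Function.update c s(x, z) β, ?_, ?_⟩
  · have key : ∀ u v w : V, G.Adj u v → G.Adj u w → v ≠ w → s(u, v) = s(x, z) →
        Function.update c s(x, z) β s(u, w) ≠ β := by
      intro u v w huv huw hvw h
      have hne : s(u, w) ≠ s(x, z) := by
        rw [← h]; simp only [ne_eq, Sym2.eq_iff, true_and, not_or]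
        exact ⟨fun h => hvw h.symm, fun h => huv.ne h.1⟩
      rw [Function.update_of_ne hne]
      rcases Sym2.eq_iff.1 h with ⟨rfl, rfl⟩ | ⟨rfl, rfl⟩
      · exact hx.2 w (delEdge_adj.2 ⟨huw, hne⟩)
      · exact hz.2 w (delEdge_adj.2 ⟨huw, hne⟩)
    intro u v w huv huw hvw
    by_cases h1 : s(u, v) = s(x, z)
    · have := key u v w huv huw hvw h1
      rw [h1, Function.update_self]; exact this.symm
    · by_cases h2 : s(u, w) = s(x, z)
      · have := key u w v huw huv hvw.symm h2
        rw [h2, Function.update_self]; exact this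
      · rw [Function.update_of_ne h1, Function.update_of_ne h2]
        exact hc.1 u v w (delEdge_adj.2 ⟨huv, h1⟩) (delEdge_adj.2 ⟨huw, h2⟩) hvw
  · intro u v huv
    by_cases h1 : s(u, v) = s(x, z)
    · rw [h1, Function.update_self]; exact hx.1
    · rw [Function.update_of_ne h1]; exact hc.2 u v (delEdge_adj.2 ⟨huv, h1⟩)

/-- Kempe change: interchanging `α` and `β` on a set `C` closed under the edges coloured `α` or `β`
frees `β` at `z ∈ C`, where `α` was free, and keeps it free at `x ∉ C`. -/
lemma extend_of_swap {V : Type*} {G : SimpleGraph V} {x z : V} {k : ℕ}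
    {c : Sym2 V → ℕ} (hc : IsColoring (delEdge G x z) c k) {α β : ℕ}
    (hx : IsMissing (delEdge G x z) c k x β) (hz : IsMissing (delEdge G x z) c k z α)
    (C : Set V) (hzC : z ∈ C) (hxC : x ∉ C)
    (hC : ∀ u v, (delEdge G x z).Adj u v → (c s(u, v) = α ∨ c s(u, v) = β) → u ∈ C → v ∈ C) :
    ∃ c', IsColoring G c' k := by
  classical
  set H := delEdge G x z
  let c' : Sym2 V → ℕ := fun e => if ∃ u ∈ e, u ∈ C then Equiv.swap α β (c e) else c e
  have hin : ∀ u v, H.Adj u v → u ∈ C → c' s(u, v) = Equiv.swap α β (c s(u, v)) := by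
    intro u v _ hu
    exact if_pos ⟨u, by simp, hu⟩
  have hout : ∀ u v, H.Adj u v → u ∉ C → c' s(u, v) = c s(u, v) := by
    intro u v huv hu
    by_cases h : ∃ w ∈ s(u, v), w ∈ C
    · have hv : v ∈ C := by
        obtain ⟨w, hw, hwC⟩ := h
        rcases Sym2.mem_iff.1 hw with rfl | rfl
        · exact absurd hwC hu
        · exact hwC
      have h2 : ¬ (c s(u, v) = α ∨ c s(u, v) = β) := by
        intro h3
        refine hu (hC v u huv.symm ?_ hv)
        rwa [Sym2.eq_swap]
      push Not at h2
      simp only [c', if_pos h]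
      exact Equiv.swap_apply_of_ne_of_ne h2.1 h2.2
    · exact if_neg h
  refine extend_of_common_missing (c := c') (β := β) (x := x) (z := z) ⟨?_, ?_⟩ ⟨hx.1, ?_⟩ ⟨hx.1, ?_⟩
  · intro u v w huv huw hvw
    by_cases hu : u ∈ C
    · rw [hin u v huv hu, hin u w huw hu]
      exact fun h => hc.1 u v w huv huw hvw ((Equiv.swap α β).injective h)
    · rw [hout u v huv hu, hout u w huw hu]
      exact hc.1 u v w huv huw hvw
  · intro u v huv
    have h1 := hc.2 u v huv
    by_cases hu : u ∈ C
    · rw [hin u v huv hu, Equiv.swap_apply_def]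
      split_ifs
      · exact hx.1
      · exact hz.1
      · exact h1
    · rw [hout u v huv hu]; exact h1
  · intro u hu
    rw [hout x u hu hxC]; exact hx.2 u hu
  · intro u hu
    rw [hin z u hu hzC]
    intro h
    have : c s(z, u) = α := by
      have := congrArg (Equiv.swap α β) h
      simpa using this
    exact hz.2 u hu this

/-- In a graph of maximum degree at most two, a component has at most two vertices of degree at most
one: a connected graph on `n` vertices has at least `n - 1` edges, hence degree sum `≥ 2n - 2`. -/
lemma not_three_ends {V : Type*} [Fintype V] [DecidableEq V] (K : SimpleGraph V)
    [DecidableRel K.Adj]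
    (h2 : ∀ v, K.degree v ≤ 2) {x y z : V} (hx : K.degree x ≤ 1) (hy : K.degree y ≤ 1)
    (hz : K.degree z ≤ 1) (hxy : x ≠ y) (hxz : x ≠ z) (hyz : y ≠ z)
    (rxy : K.Reachable x y) (rxz : K.Reachable x z) : False := by
  classical
  let C := K.connectedComponentMk x
  have hconn : (K.induce C.supp).Connected := C.connected_toSimpleGraph
  have h1 := hconn.card_vert_le_card_edgeSet_add_one
  have hsum := (K.induce C.supp).sum_degrees_eq_twice_card_edges
  rw [Nat.card_eq_fintype_card, Nat.card_eq_fintype_card, ← SimpleGraph.edgeFinset_card] at h1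
  have hdeg : ∀ v : C.supp, (K.induce C.supp).degree v ≤ K.degree v := by
    intro v
    rw [← SimpleGraph.card_neighborFinset_eq_degree, ← SimpleGraph.card_neighborFinset_eq_degree]
    refine Finset.card_le_card_of_injOn (fun w => (w : V)) ?_ (fun a _ b _ h => Subtype.ext h)
    intro w hw
    simp at hw ⊢
    exact hw
  let S : Finset C.supp := {⟨x, rfl⟩, ⟨y, (SimpleGraph.ConnectedComponent.eq.2 rxy).symm⟩,
    ⟨z, (SimpleGraph.ConnectedComponent.eq.2 rxz).symm⟩}
  have hS : S.card = 3 := by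
    rw [Finset.card_eq_three]
    exact ⟨_, _, _, fun h => hxy (congrArg Subtype.val h), fun h => hxz (congrArg Subtype.val h),
      fun h => hyz (congrArg Subtype.val h), rfl⟩
  have hb : ∑ v : C.supp, ((K.induce C.supp).degree v + if v ∈ S then 1 else 0)
      ≤ ∑ v : C.supp, 2 := by
    refine Finset.sum_le_sum fun v _ => ?_
    split_ifs with h
    · have := hdeg v
      have h3 : K.degree v ≤ 1 := by
        simp only [S, Finset.mem_insert, Finset.mem_singleton] at h
        rcases h with rfl | rfl | rfl <;> assumption
      omega
    · have := hdeg v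
      have := h2 v
      omega
  rw [Finset.sum_add_distrib, hsum, Finset.sum_ite_mem, Finset.univ_inter] at hb
  simp only [Finset.sum_const, smul_eq_mul, mul_one, hS, Finset.card_univ] at hb
  omega

/-- One colouring step: when `K² > D`, a colouring with `D + K` colours of all edges but one extends.
The end `y` of the uncoloured edge `xy` and the neighbours of `x` reached along colours missing at
`y` are at least `K + 1` vertices with at least `K` missing colours each, so two of them miss a
common colour `α`. For `β` missing at `x`, only one of these two can lie in the `αβ`-component of
`x`; the uncoloured edge is moved to the other one and a Kempe change finishes. -/
lemma extend_coloring {V : Type*} [Fintype V] {G : SimpleGraph V} [DecidableRel G.Adj] {D K : ℕ}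
    (hD : ∀ v, G.degree v ≤ D) (hK : D < K * K) {x y : V} (hxy : G.Adj x y) {c : Sym2 V → ℕ}
    (hc : IsColoring (delEdge G x y) c (D + K)) : ∃ c', IsColoring G c' (D + K) := by
  classical
  set H := delEdge G x y with hH
  have hKpos : 0 < K := by by_contra h; have : K = 0 := by omega
                           subst this; omega
  let M : V → Finset ℕ := fun v => (Finset.range (D + K)).filter
    (fun n => ∀ u, H.Adj v u → c s(v, u) ≠ n)
  have hM : ∀ v n, n ∈ M v ↔ IsMissing H c (D + K) v n := by
    intro v n; simp [M, IsMissing]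
  have hMcard : ∀ v, K ≤ (M v).card := by
    intro v
    have h1 : Finset.range (D + K) ⊆ M v ∪ (G.neighborFinset v).image (fun u => c s(v, u)) := by
      intro n hn
      by_cases h : n ∈ M v
      · exact Finset.mem_union_left _ h
      · simp only [M, Finset.mem_filter, hn, true_and, not_forall, not_not] at h
        obtain ⟨u, hu, rfl⟩ := h
        refine Finset.mem_union_right _ (Finset.mem_image.2 ⟨u, ?_, rfl⟩)
        simpa using (delEdge_adj.1 hu).1
    have h2 := (Finset.card_le_card h1).trans (Finset.card_union_le _ _)
    have h3 : ((G.neighborFinset v).image (fun u => c s(v, u))).card ≤ D :=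
      Finset.card_image_le.trans (by simpa using hD v)
    rw [Finset.card_range] at h2
    omega
  by_cases hcommon : ∃ β, β ∈ M x ∧ β ∈ M y
  · obtain ⟨β, h1, h2⟩ := hcommon
    exact extend_of_common_missing hc ((hM _ _).1 h1) ((hM _ _).1 h2)
  push Not at hcommon
  have hnb : ∀ γ ∈ M y, ∃ w, H.Adj x w ∧ c s(x, w) = γ := by
    intro γ hγ
    by_contra hcon
    push Not at hcon
    exact hcommon γ ((hM _ _).2 ⟨((hM _ _).1 hγ).1, hcon⟩) hγ
  have : Nonempty V := ⟨x⟩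
  choose! nb hnb1 hnb2 using hnb
  have hynot : y ∉ (M y).image nb := by
    intro h
    obtain ⟨γ, hγ, h2⟩ := Finset.mem_image.1 h
    have := (delEdge_adj.1 (hnb1 γ hγ)).2
    rw [h2] at this
    exact this rfl
  let Y := insert y ((M y).image nb)
  have hYcard : K + 1 ≤ Y.card := by
    rw [Finset.card_insert_of_notMem hynot, Finset.card_image_of_injOn]
    · have := hMcard y; omega
    · intro a ha b hb hab
      rw [← hnb2 a ha, ← hnb2 b hb, hab]
  obtain ⟨y₁, hy₁, y₂, hy₂, hne, α, hα₁, hα₂⟩ :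
      ∃ y₁ ∈ Y, ∃ y₂ ∈ Y, y₁ ≠ y₂ ∧ ∃ α, α ∈ M y₁ ∧ α ∈ M y₂ := by
    by_contra hcon
    push Not at hcon
    have hdisj : (Y : Set V).PairwiseDisjoint M := by
      intro a ha b hb hab
      exact Finset.disjoint_left.2 fun n hn1 hn2 => hcon a ha b hb hab n hn1 hn2
    have h1 := Finset.card_biUnion hdisj
    have h2 : (Y.biUnion M).card ≤ D + K := by
      rw [← Finset.card_range (D + K)]
      refine Finset.card_le_card (Finset.biUnion_subset.2 fun v _ => Finset.filter_subset _ _)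
    have h3 : Y.card * K ≤ ∑ v ∈ Y, (M v).card := by
      rw [← smul_eq_mul]; exact Finset.card_nsmul_le_sum _ _ _ fun v _ => hMcard v
    have h4 : (K + 1) * K ≤ Y.card * K := Nat.mul_le_mul_right _ hYcard
    nlinarith
  obtain ⟨β, hβ⟩ : (M x).Nonempty := Finset.card_pos.1 (hKpos.trans_le (hMcard x))
  have hβx := (hM _ _).1 hβ
  -- If `C` is a closed set avoiding `x`, containing some `z ∈ Y` missing `α`, the colouring extends.
  have finish : ∀ z ∈ Y, α ∈ M z → ∀ C : Set V, z ∈ C → x ∉ C →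
      (∀ u v, H.Adj u v → (c s(u, v) = α ∨ c s(u, v) = β) → u ∈ C → v ∈ C) →
      ∃ c', IsColoring G c' (D + K) := by
    intro z hz hαz C hzC hxC hC
    have hαz' := (hM _ _).1 hαz
    rcases Finset.mem_insert.1 hz with rfl | hz
    · exact extend_of_swap hc hβx hαz' C hzC hxC hC
    · obtain ⟨γ, hγ, rfl⟩ := Finset.mem_image.1 hz
      set z := nb γ
      have hxz : H.Adj x z := hnb1 γ hγ
      have hcz : c s(x, z) = γ := hnb2 γ hγ
      have hγy := (hM _ _).1 hγ
      have hγα : γ ≠ α := by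
        intro h
        refine hαz'.2 x hxz.symm ?_
        rw [Sym2.eq_swap, hcz, h]
      have hγβ : γ ≠ β := by
        intro h; exact hβx.2 z hxz (hcz.trans h)
      have hadj : ∀ u v, (delEdge G x z).Adj u v → s(u, v) = s(x, y) ∨ H.Adj u v := by
        intro u v huv
        by_cases h : s(u, v) = s(x, y)
        · exact Or.inl h
        · exact Or.inr (delEdge_adj.2 ⟨(delEdge_adj.1 huv).1, h⟩)
      have hHne : ∀ u v, H.Adj u v → s(u, v) ≠ s(x, y) := fun u v h => (delEdge_adj.1 h).2
      -- moving the colour `γ` from `xz` to `xy`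
      let c₁ := Function.update c s(x, y) γ
      have hc1a : c₁ s(x, y) = γ := Function.update_self _ _ _
      have hc1b : ∀ u v, H.Adj u v → c₁ s(u, v) = c s(u, v) := fun u v h =>
        Function.update_of_ne (hHne u v h) _ _
      have hprop : ∀ u v w, (delEdge G x z).Adj u v → (delEdge G x z).Adj u w → v ≠ w →
          s(u, v) = s(x, y) → c₁ s(u, w) ≠ γ := by
        intro u v w huv huw hvw h
        have hw : H.Adj u w := by
          rcases hadj u w huw with h' | h'
          · rw [← h] at h'
            rcases Sym2.eq_iff.1 h' with ⟨_, h⟩ | ⟨h1, h2⟩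
            · exact absurd h.symm hvw
            · exact absurd h1 huv.ne
          · exact h'
        rw [hc1b u w hw]
        rcases Sym2.eq_iff.1 h with ⟨rfl, rfl⟩ | ⟨rfl, rfl⟩
        · intro h'
          have hwz : w ≠ z := fun h => (delEdge_adj.1 huw).2 (by rw [h])
          exact hc.1 u w z hw hxz hwz (h'.trans hcz.symm)
        · exact hγy.2 w hw
      refine extend_of_swap (c := c₁) (x := x) (z := z) (α := α) (β := β) ⟨?_, ?_⟩ ⟨hβx.1, ?_⟩
        ⟨hαz'.1, ?_⟩ C hzC hxC ?_
      · intro u v w huv huw hvw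
        rcases hadj u v huv with h1 | h1
        · rw [h1, hc1a]; exact (hprop u v w huv huw hvw h1).symm
        · rcases hadj u w huw with h2 | h2
          · rw [h2, hc1a]; exact hprop u w v huw huv hvw.symm h2
          · rw [hc1b u v h1, hc1b u w h2]; exact hc.1 u v w h1 h2 hvw
      · intro u v huv
        rcases hadj u v huv with h1 | h1
        · rw [h1, hc1a]; exact hγy.1
        · rw [hc1b u v h1]; exact hc.2 u v h1
      · intro u hu
        rcases hadj x u hu with h1 | h1
        · rw [h1, hc1a]; exact hγβ
        · rw [hc1b x u h1]; exact hβx.2 u h1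
      · intro u hu
        rcases hadj z u hu with h1 | h1
        · rw [h1, hc1a]; exact hγα
        · rw [hc1b z u h1]; exact hαz'.2 u h1
      · intro u v huv hcol hu
        rcases hadj u v huv with h1 | h1
        · rw [h1, hc1a] at hcol
          exact absurd hcol (by simp [hγα, hγβ])
        · rw [hc1b u v h1] at hcol
          exact hC u v h1 hcol hu
  -- the `αβ`-coloured subgraph
  let L : SimpleGraph V :=
    { Adj := fun u v => H.Adj u v ∧ (c s(u, v) = α ∨ c s(u, v) = β)
      symm := ⟨fun u v h => ⟨h.1.symm, by rw [Sym2.eq_swap]; exact h.2⟩⟩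
      loopless := ⟨fun u h => h.1.ne rfl⟩ }
  have close : ∀ z ∈ Y, α ∈ M z → ¬ L.Reachable z x → ∃ c', IsColoring G c' (D + K) := by
    intro z hz hαz hr
    refine finish z hz hαz {v | L.Reachable z v} (SimpleGraph.Reachable.refl z) hr ?_
    intro u v huv hcol hu
    exact hu.trans (SimpleGraph.Adj.reachable (G := L) ⟨huv, hcol⟩)
  by_cases r1 : L.Reachable y₁ x
  swap
  · exact close y₁ hy₁ hα₁ r1
  by_cases r2 : L.Reachable y₂ x
  swap
  · exact close y₂ hy₂ hα₂ r2
  exfalso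
  have hinj : ∀ v, Set.InjOn (fun u => c s(v, u)) (L.neighborFinset v : Set V) := by
    intro v a ha b hb hab
    simp only [SimpleGraph.coe_neighborFinset, SimpleGraph.mem_neighborSet] at ha hb
    by_contra hne
    exact hc.1 v a b ha.1 hb.1 hne hab
  have hdeg1 : ∀ v n n', IsMissing H c (D + K) v n → (n = α ∧ n' = β ∨ n = β ∧ n' = α) →
      L.degree v ≤ 1 := by
    intro v n n' hmiss hn
    rw [← SimpleGraph.card_neighborFinset_eq_degree, ← Finset.card_image_of_injOn (hinj v)]
    refine (Finset.card_le_card (t := {n'}) ?_).trans (by simp)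
    intro k hk
    obtain ⟨u, hu, rfl⟩ := Finset.mem_image.1 hk
    have hu' : L.Adj v u := by simpa using hu
    have := hmiss.2 u hu'.1
    rcases hu'.2 with h | h <;> rcases hn with ⟨rfl, rfl⟩ | ⟨rfl, rfl⟩ <;> simp_all
  have hdeg2 : ∀ v, L.degree v ≤ 2 := by
    intro v
    rw [← SimpleGraph.card_neighborFinset_eq_degree, ← Finset.card_image_of_injOn (hinj v)]
    refine (Finset.card_le_card (t := {α, β}) ?_).trans Finset.card_le_two
    intro k hk
    obtain ⟨u, hu, rfl⟩ := Finset.mem_image.1 hk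
    have hu' : L.Adj v u := by simpa using hu
    simpa using hu'.2
  have hYx : ∀ z ∈ Y, x ≠ z := by
    intro z hz
    rcases Finset.mem_insert.1 hz with rfl | hz
    · exact hxy.ne
    · obtain ⟨γ, hγ, rfl⟩ := Finset.mem_image.1 hz
      exact (hnb1 γ hγ).ne
  exact not_three_ends L hdeg2 (hdeg1 x β α hβx (Or.inr ⟨rfl, rfl⟩))
    (hdeg1 y₁ α β ((hM _ _).1 hα₁) (Or.inl ⟨rfl, rfl⟩))
    (hdeg1 y₂ α β ((hM _ _).1 hα₂) (Or.inl ⟨rfl, rfl⟩)) (hYx _ hy₁) (hYx _ hy₂) hne r1.symm r2.symm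

/-- A weak form of Vizing's theorem: `D + K` colours with `K² > D` suffice. -/
theorem exists_coloring_of_slack {V : Type*} [Fintype V] (D K : ℕ) (hK : D < K * K) :
    ∀ (n : ℕ) (G : SimpleGraph V) [DecidableRel G.Adj], G.edgeFinset.card = n →
      (∀ v, G.degree v ≤ D) → ∃ c, IsColoring G c (D + K) := by
  classical
  intro n
  induction n with
  | zero =>
    intro G _ hn _
    have hno : ∀ u v, ¬ G.Adj u v := by
      intro u v huv
      have : s(u, v) ∈ G.edgeFinset := by simpa using huv
      rw [Finset.card_eq_zero.1 hn] at this
      simp at this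
    exact ⟨fun _ => 0, fun u v w h => absurd h (hno u v), fun u v h => absurd h (hno u v)⟩
  | succ n ih =>
    intro G _ hn hD
    obtain ⟨e, he⟩ : G.edgeFinset.Nonempty := Finset.card_pos.1 (by omega)
    induction e with | _ x y =>
    have hxy : G.Adj x y := by simpa using he
    obtain ⟨c, hc⟩ := ih (delEdge G x y) (by
      have h1 : (delEdge G x y).edgeFinset = G.edgeFinset.erase s(x, y) := by
        ext e
        rw [SimpleGraph.mem_edgeFinset]
        simp [delEdge, SimpleGraph.edgeSet_deleteEdges, and_comm]
      rw [h1, Finset.card_erase_of_mem he, hn]; rfl) (fun v => by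
        refine le_trans ?_ (hD v)
        exact SimpleGraph.degree_le_of_le (SimpleGraph.deleteEdges_le _))
    exact extend_coloring hD hK hxy hc

/-! ### Rounding fractional choices -/

/-- If `φ` picks outcomes of positive weight, then the error it makes on a load is at most the total
coefficient of the outcomes with weight strictly between `0` and `1`. -/
lemma rounding_error_le {I Ω : Type*} [Fintype I] [Fintype Ω] (a : I → Ω → ℝ)
    (ha : ∀ i ω, 0 ≤ a i ω) (x : I → Ω → ℝ) (hx0 : ∀ i ω, 0 ≤ x i ω)
    (hx1 : ∀ i, ∑ ω, x i ω = 1) (φ : I → Ω) (hφ : ∀ i, 0 < x i (φ i)) :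
    |∑ i, a i (φ i) - ∑ i, ∑ ω, a i ω * x i ω| ≤
      ∑ i, ∑ ω, if 0 < x i ω ∧ x i ω < 1 then a i ω else 0 := by
  classical
  rw [← Finset.sum_sub_distrib]
  refine (Finset.abs_sum_le_sum_abs _ _).trans (Finset.sum_le_sum fun i _ => ?_)
  have h1 : a i (φ i) = ∑ ω, a i ω * (if φ i = ω then 1 else 0) := by simp
  rw [h1, ← Finset.sum_sub_distrib]
  refine (Finset.abs_sum_le_sum_abs _ _).trans (Finset.sum_le_sum fun ω _ => ?_)
  have hle : x i ω ≤ 1 := by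
    rw [← hx1 i]; exact Finset.single_le_sum (fun ω _ => hx0 i ω) (Finset.mem_univ ω)
  rw [← mul_sub, abs_mul, abs_of_nonneg (ha i ω)]
  by_cases hf : 0 < x i ω ∧ x i ω < 1
  · rw [if_pos hf]
    refine mul_le_of_le_one_right (ha i ω) ?_
    rw [abs_le]; split_ifs <;> constructor <;> linarith [hf.1, hf.2]
  · rw [if_neg hf]
    have h0 : (if φ i = ω then (1 : ℝ) else 0) - x i ω = 0 := by
      by_cases hpos : 0 < x i ω
      · have hone : x i ω = 1 := le_antisymm hle (not_lt.1 fun h => hf ⟨hpos, h⟩)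
        have : φ i = ω := by
          by_contra hne
          have h2 : x i ω + x i (φ i) ≤ ∑ ω, x i ω := by
            rw [← Finset.sum_pair (f := x i) (Ne.symm hne)]
            exact Finset.sum_le_sum_of_subset_of_nonneg (Finset.subset_univ _)
              (fun ω _ _ => hx0 i ω)
          rw [hx1 i] at h2
          linarith [hφ i]
        rw [if_pos this, hone, sub_self]
      · have hz : x i ω = 0 := le_antisymm (not_lt.1 hpos) (hx0 i ω)
        have : φ i ≠ ω := by
          rintro rfl; exact hpos (hφ i)
        rw [if_neg this, hz, sub_self]
    rw [h0]; simp

/-- Beck–Fiala rounding. Every item `i` chooses an outcome; `x i` is a probability vector on the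
outcomes, and outcome `ω` of item `i` puts load `a c i ω` on `c`. If every single outcome puts total
load at most `K`, then outcomes of positive weight can be chosen such that every load is within `2K`
of its average.

Loads whose fractional outcomes have total coefficient at most `2K` need no attention any more. There
are less than half as many other loads as fractional outcomes, and items with a fractional outcome
have at least two of them, so `x` can be moved without changing the other loads until some outcome
drops out. -/
theorem exists_rounding {I Ω C : Type*} [Fintype I] [Fintype Ω] [Fintype C]
    (a : C → I → Ω → ℝ) (ha : ∀ c i ω, 0 ≤ a c i ω) (K : ℝ) (hK : 0 < K)
    (hcol : ∀ i ω, ∑ c, a c i ω ≤ K) :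
    ∀ (n : ℕ) (x : I → Ω → ℝ), (∀ i ω, 0 ≤ x i ω) → (∀ i, ∑ ω, x i ω = 1) →
      {q : I × Ω | 0 < x q.1 q.2}.ncard ≤ n →
      ∃ φ : I → Ω, (∀ i, 0 < x i (φ i)) ∧
        ∀ c, |∑ i, a c i (φ i) - ∑ i, ∑ ω, a c i ω * x i ω| ≤ 2 * K := by
  classical
  intro n
  induction n with
  | zero =>
    intro x hx0 hx1 hn
    have hemp : {q : I × Ω | 0 < x q.1 q.2} = ∅ := by
      rw [← Set.ncard_eq_zero (Set.toFinite _)]; omega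
    have hI : IsEmpty I := by
      refine ⟨fun i => ?_⟩
      have h1 : ∑ ω, x i ω = 0 := Finset.sum_eq_zero fun ω _ => by
        by_contra hne
        have : (i, ω) ∈ {q : I × Ω | 0 < x q.1 q.2} := lt_of_le_of_ne (hx0 i ω) (Ne.symm hne)
        rw [hemp] at this; exact this
      rw [hx1 i] at h1; norm_num at h1
    refine ⟨fun i => hI.elim i, fun i => hI.elim i, fun c => ?_⟩
    simp; linarith
  | succ n ih =>
    intro x hx0 hx1 hn
    let F : Finset (I × Ω) := Finset.univ.filter fun q => 0 < x q.1 q.2 ∧ x q.1 q.2 < 1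
    have hsumF : ∀ c, (∑ i, ∑ ω, if 0 < x i ω ∧ x i ω < 1 then a c i ω else 0) =
        ∑ q ∈ F, a c q.1 q.2 := by
      intro c
      rw [Finset.sum_filter, ← Finset.univ_product_univ, Finset.sum_product]
    rcases F.eq_empty_or_nonempty with hF | hF
    · have hex : ∀ i, ∃ ω, 0 < x i ω := by
        intro i
        by_contra hcon
        push Not at hcon
        have : ∑ ω, x i ω ≤ 0 := Finset.sum_nonpos fun ω _ => hcon ω
        rw [hx1 i] at this; linarith
      choose φ hφ using hex
      refine ⟨φ, hφ, fun c => (rounding_error_le (a c) (ha c) x hx0 hx1 φ hφ).trans ?_⟩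
      rw [hsumF, hF]; simp; linarith
    · let Act : Finset C := Finset.univ.filter fun c => 2 * K < ∑ q ∈ F, a c q.1 q.2
      let J : Finset I := F.image Prod.fst
      have hAct : 2 * Act.card < F.card := by
        have h1 : ∑ c ∈ Act, ∑ q ∈ F, a c q.1 q.2 ≤ F.card * K := by
          rw [Finset.sum_comm]
          rw [← nsmul_eq_mul]
          refine Finset.sum_le_card_nsmul _ _ _ fun q _ => ?_
          exact (Finset.sum_le_sum_of_subset_of_nonneg (Finset.subset_univ _)
            (fun c _ _ => ha c _ _)).trans (hcol q.1 q.2)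
        have hFpos : (0 : ℝ) < F.card := by exact_mod_cast Finset.card_pos.2 hF
        rcases Act.eq_empty_or_nonempty with hA | hA
        · rw [hA]; simpa using hF
        · have h2 : Act.card * (2 * K) < ∑ c ∈ Act, ∑ q ∈ F, a c q.1 q.2 := by
            rw [← nsmul_eq_mul, ← Finset.sum_const]
            exact Finset.sum_lt_sum_of_nonempty hA fun c hc => (Finset.mem_filter.1 hc).2
          have h3 : (2 * Act.card : ℝ) < F.card := by
            have : (2 * Act.card : ℝ) * K < F.card * K := by linarith
            exact lt_of_mul_lt_mul_right this hK.le
          exact_mod_cast h3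
      have hJ : 2 * J.card ≤ F.card := by
        rw [Finset.card_eq_sum_card_image Prod.fst F, mul_comm, ← smul_eq_mul]
        refine Finset.card_nsmul_le_sum _ _ _ fun i hi => ?_
        obtain ⟨⟨i', ω⟩, hq, rfl⟩ := Finset.mem_image.1 hi
        have hq' := (Finset.mem_filter.1 hq).2
        simp only at hq' ⊢
        obtain ⟨ω', hω', hpos⟩ : ∃ ω', ω' ≠ ω ∧ 0 < x i' ω' := by
          by_contra hcon
          push Not at hcon
          have h1 := hx1 i'
          rw [Finset.sum_eq_single ω (fun ω' _ h => le_antisymm (hcon ω' h) (hx0 i' ω'))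
            (by simp)] at h1
          linarith [hq'.2]
        have h2 : x i' ω + x i' ω' ≤ 1 := by
          rw [← hx1 i', ← Finset.sum_pair (f := x i') (Ne.symm hω')]
          exact Finset.sum_le_sum_of_subset_of_nonneg (Finset.subset_univ _)
            (fun ω _ _ => hx0 i' ω)
        refine Nat.succ_le_of_lt (Finset.one_lt_card.2 ⟨(i', ω), ?_, (i', ω'), ?_, ?_⟩)
        · exact Finset.mem_filter.2 ⟨hq, rfl⟩
        · refine Finset.mem_filter.2 ⟨Finset.mem_filter.2 ⟨Finset.mem_univ _, hpos, ?_⟩, rfl⟩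
          simp only
          linarith [hq'.1]
        · simpa using Ne.symm hω'
      -- a nonzero direction supported on `F`, keeping the active loads and the item totals
      let T : (F → ℝ) →ₗ[ℝ] (Act → ℝ) × (J → ℝ) :=
        { toFun := fun y => (fun c => ∑ q : F, a c q.1.1 q.1.2 * y q,
            fun i => ∑ q : F, if q.1.1 = (i : I) then y q else 0)
          map_add' := by
            intro y z
            ext c
            · simp [mul_add, Finset.sum_add_distrib]
            · simp only [Pi.add_apply, Prod.snd_add]
              rw [← Finset.sum_add_distrib]
              refine Finset.sum_congr rfl fun q _ => ?_
              split_ifs <;> simp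
          map_smul' := by
            intro r y
            ext c
            · simp only [Pi.smul_apply, smul_eq_mul, RingHom.id_apply, Prod.smul_fst]
              rw [Finset.mul_sum]
              exact Finset.sum_congr rfl fun q _ => by ring
            · simp only [Pi.smul_apply, smul_eq_mul, RingHom.id_apply, Prod.smul_snd]
              rw [Finset.mul_sum]
              refine Finset.sum_congr rfl fun q _ => ?_
              split_ifs <;> simp }
      have hker : LinearMap.ker T ≠ ⊥ := by
        refine LinearMap.ker_ne_bot_of_finrank_lt ?_
        rw [Module.finrank_prod, Module.finrank_fintype_fun_eq_card,
          Module.finrank_fintype_fun_eq_card, Module.finrank_fintype_fun_eq_card,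
          Fintype.card_coe, Fintype.card_coe, Fintype.card_coe]
        omega
      obtain ⟨y, hyT, hy0⟩ := (Submodule.ne_bot_iff _).1 hker
      rw [LinearMap.mem_ker] at hyT
      let Y : I × Ω → ℝ := fun q => if h : q ∈ F then y ⟨q, h⟩ else 0
      have hYF : ∀ q ∉ F, Y q = 0 := fun q hq => dif_neg hq
      have hYy : ∀ q : F, Y q = y q := fun q => dif_pos q.2
      have hYact : ∀ c ∈ Act, ∑ q, a c q.1 q.2 * Y q = 0 := by
        intro c hc
        have h1 := congrFun (congrArg Prod.fst hyT) ⟨c, hc⟩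
        simp only [T, LinearMap.coe_mk, AddHom.coe_mk, Prod.fst_zero, Pi.zero_apply] at h1
        refine Eq.trans ?_ h1
        rw [← Finset.sum_subset (Finset.subset_univ F)
          (fun q _ hq => by rw [hYF q hq, mul_zero]), ← Finset.sum_coe_sort]
        exact Finset.sum_congr rfl fun q _ => by rw [hYy]
      have hYitem : ∀ i, ∑ ω, Y (i, ω) = 0 := by
        intro i
        by_cases hi : i ∈ J
        · have h1 := congrFun (congrArg Prod.snd hyT) ⟨i, hi⟩
          simp only [T, LinearMap.coe_mk, AddHom.coe_mk, Prod.snd_zero, Pi.zero_apply] at h1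
          have h2 : ∑ q : I × Ω, (if q.1 = i then Y q else 0) = ∑ ω, Y (i, ω) := by
            rw [← Finset.univ_product_univ, Finset.sum_product]
            rw [Finset.sum_eq_single i (fun j _ hj => by simp [hj]) (by simp)]
            simp
          rw [← h2]
          refine Eq.trans ?_ h1
          rw [← Finset.sum_subset (Finset.subset_univ F)
            (fun q _ hq => by rw [hYF q hq]; simp), ← Finset.sum_coe_sort]
          exact Finset.sum_congr rfl fun q _ => by rw [hYy]
        · refine Finset.sum_eq_zero fun ω _ => hYF _ fun h => hi ?_
          exact Finset.mem_image.2 ⟨_, h, rfl⟩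
      have hneg : (Finset.univ.filter fun q => Y q < 0).Nonempty := by
        by_contra hcon
        rw [Finset.not_nonempty_iff_eq_empty, Finset.filter_eq_empty_iff] at hcon
        refine hy0 (funext fun q => ?_)
        have h1 := (Finset.sum_eq_zero_iff_of_nonneg
          (fun ω _ => not_lt.1 (hcon (Finset.mem_univ (q.1.1, ω))))).1 (hYitem q.1.1) q.1.2
          (Finset.mem_univ _)
        rw [← hYy]; exact h1
      obtain ⟨q₀, hq₀, hmin⟩ := Finset.exists_min_image _ (fun q : I × Ω => x q.1 q.2 / (-Y q)) hneg
      have hY0 : Y q₀ < 0 := (Finset.mem_filter.1 hq₀).2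
      have hq₀F : q₀ ∈ F := by by_contra h; rw [hYF _ h] at hY0; exact lt_irrefl _ hY0
      set t := x q₀.1 q₀.2 / (-Y q₀) with ht
      have ht0 : 0 ≤ t := div_nonneg (hx0 _ _) (by linarith)
      let x' : I → Ω → ℝ := fun i ω => x i ω + t * Y (i, ω)
      have hx'0 : ∀ i ω, 0 ≤ x' i ω := by
        intro i ω
        by_cases hneg' : Y (i, ω) < 0
        · have h1 := hmin (i, ω) (Finset.mem_filter.2 ⟨Finset.mem_univ _, hneg'⟩)
          simp only at h1
          rw [le_div_iff₀ (by linarith)] at h1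
          simp only [x']; linarith
        · exact add_nonneg (hx0 i ω) (mul_nonneg ht0 (not_lt.1 hneg'))
      have hx'1 : ∀ i, ∑ ω, x' i ω = 1 := by
        intro i
        simp only [x']
        rw [Finset.sum_add_distrib, hx1, ← Finset.mul_sum, hYitem, mul_zero, add_zero]
      have hsupp : ∀ i ω, 0 < x' i ω → 0 < x i ω := by
        intro i ω h
        by_contra hcon
        have hz : (i, ω) ∉ F := fun h => hcon (Finset.mem_filter.1 h).2.1
        simp only [x', hYF _ hz, mul_zero, add_zero] at h
        exact hcon h
      have hzero : x' q₀.1 q₀.2 = 0 := by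
        have hne : Y q₀ ≠ 0 := hY0.ne
        simp only [x', ht, Prod.mk.eta]
        rw [div_neg, neg_mul, div_mul_cancel₀ _ hne, add_neg_cancel]
      obtain ⟨φ, hφ, herr⟩ := ih x' hx'0 hx'1 (by
        have : {q : I × Ω | 0 < x' q.1 q.2}.ncard < {q : I × Ω | 0 < x q.1 q.2}.ncard := by
          refine Set.ncard_lt_ncard ?_ (Set.toFinite _)
          refine (Set.ssubset_iff_of_subset fun q hq => hsupp _ _ hq).2 ⟨q₀, ?_, ?_⟩
          · exact (Finset.mem_filter.1 hq₀F).2.1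
          · change ¬ 0 < x' q₀.1 q₀.2
            rw [hzero]; exact lt_irrefl _
        omega)
      have hφ' : ∀ i, 0 < x i (φ i) := fun i => hsupp _ _ (hφ i)
      refine ⟨φ, hφ', fun c => ?_⟩
      by_cases hc : c ∈ Act
      · have h1 : ∑ i, ∑ ω, a c i ω * x' i ω = ∑ i, ∑ ω, a c i ω * x i ω := by
          have h2 := hYact c hc
          rw [← Finset.univ_product_univ, Finset.sum_product] at h2
          simp only [x', mul_add, Finset.sum_add_distrib]
          have h3 : ∑ i, ∑ ω, a c i ω * (t * Y (i, ω)) = t * ∑ i, ∑ ω, a c i ω * Y (i, ω) := by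
            rw [Finset.mul_sum]
            refine Finset.sum_congr rfl fun i _ => ?_
            rw [Finset.mul_sum]
            exact Finset.sum_congr rfl fun ω _ => by ring
          rw [h3, h2, mul_zero, add_zero]
        rw [← h1]; exact herr c
      · refine (rounding_error_le (a c) (ha c) x hx0 hx1 φ hφ').trans ?_
        rw [hsumF]
        exact not_lt.1 fun h => hc (Finset.mem_filter.2 ⟨Finset.mem_univ _, h⟩)

/-! ### Greedy labelling -/

/-- Greedy labelling: if every object is near at most `d` others, every label conflicts with at most
`M` labels, and there are more than `d * M` labels, then near objects can be given non-conflicting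
labels. -/
theorem exists_labelling {V W : Type*} [Fintype V] [Fintype W] (near : V → V → Prop)
    (hnear : ∀ u v, near u v → near v u) (conf : W → W → Prop)
    (hconf : ∀ w w', conf w w' → conf w' w) (d M : ℕ)
    (hd : ∀ v, {u | near v u}.ncard ≤ d) (hM : ∀ w, {w' | conf w w'}.ncard ≤ M)
    (hcard : d * M < Fintype.card W) :
    ∃ f : V → W, ∀ u v, near u v → u ≠ v → ¬ conf (f u) (f v) := by
  classical
  have hW : Nonempty W := Fintype.card_pos_iff.1 (by omega)
  suffices h : ∀ s : Finset V, ∃ f : V → W, ∀ u ∈ s, ∀ v ∈ s, near u v → u ≠ v →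
      ¬ conf (f u) (f v) by
    obtain ⟨f, hf⟩ := h Finset.univ
    exact ⟨f, fun u v => hf u (Finset.mem_univ _) v (Finset.mem_univ _)⟩
  intro s
  induction s using Finset.induction_on with
  | empty => exact ⟨fun _ => hW.some, by simp⟩
  | insert a s ha ih =>
    obtain ⟨f, hf⟩ := ih
    let bad : Finset W := (Finset.univ.filter fun u => near a u).biUnion
      fun u => Finset.univ.filter fun w => conf (f u) w
    have hbad : bad.card ≤ d * M := by
      refine (Finset.card_biUnion_le_card_mul _ _ M fun u _ => ?_).trans
        (Nat.mul_le_mul_right _ ?_)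
      · rw [← Set.ncard_coe_finset]; simpa using hM (f u)
      · rw [← Set.ncard_coe_finset]; simpa using hd a
    obtain ⟨w, hw⟩ : ∃ w, w ∉ bad := by
      by_contra hcon
      push Not at hcon
      have : bad = Finset.univ := Finset.eq_univ_iff_forall.2 hcon
      rw [this, Finset.card_univ] at hbad
      omega
    have hw' : ∀ u, near a u → ¬ conf (f u) w := by
      intro u hu hc
      exact hw (Finset.mem_biUnion.2 ⟨u, by simpa using hu, by simpa using hc⟩)
    have hne : ∀ u ∈ s, u ≠ a := fun u hu h => ha (h ▸ hu)
    refine ⟨Function.update f a w, fun u hu v hv huv huv' => ?_⟩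
    rcases Finset.mem_insert.1 hu with rfl | hu
    · rcases Finset.mem_insert.1 hv with rfl | hv
      · exact absurd rfl huv'
      · rw [Function.update_self, Function.update_of_ne (hne v hv)]
        exact fun hc => hw' v huv (hconf _ _ hc)
    · rcases Finset.mem_insert.1 hv with rfl | hv
      · rw [Function.update_self, Function.update_of_ne huv']
        exact hw' u (hnear _ _ huv)
      · rw [Function.update_of_ne (hne v hv), Function.update_of_ne (hne u hu)]
        exact hf u hu v hv huv huv'

/-! ### Counting functions with prescribed local behaviour -/

/-- The number of functions `h : ι → α` with `h (g v) ∈ T v` for `v ∈ S`, for `g` injective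
on `S`. -/
theorem card_fun_constrained {κ ι α : Type*} [Fintype ι] [Fintype α] [Nonempty α]
    (S : Finset κ) (g : κ → ι) (hg : Set.InjOn g S) (T : κ → Finset α) :
    ({h : ι → α | ∀ v ∈ S, h (g v) ∈ T v}.ncard : ℝ) =
      (Fintype.card α : ℝ) ^ Fintype.card ι *
        ∏ v ∈ S, ((T v).card : ℝ) / Fintype.card α := by
  classical
  have hα : (Fintype.card α : ℝ) ≠ 0 := by exact_mod_cast Fintype.card_ne_zero
  let U : ι → Finset α := fun i => Finset.univ.filter fun a => ∀ v ∈ S, g v = i → a ∈ T v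
  have h1 : {h : ι → α | ∀ v ∈ S, h (g v) ∈ T v} = ↑(Fintype.piFinset U) := by
    ext h
    simp only [Set.mem_ofPred_eq, Finset.mem_coe, Finset.mem_filter, Finset.mem_univ, true_and,
      Fintype.mem_piFinset, U]
    constructor
    · rintro hh i v hv rfl; exact hh v hv
    · intro hh v hv; exact hh _ v hv rfl
  rw [h1, Set.ncard_coe_finset, Fintype.card_piFinset]
  push_cast
  have h2 : ∀ v ∈ S, U (g v) = T v := by
    intro v hv
    ext a
    simp only [Finset.mem_filter, Finset.mem_univ, true_and, U]
    constructor
    · intro h; exact h v hv rfl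
    · intro h w hw hwv; rwa [hg hw hv hwv]
  have h3 : ∏ v ∈ S, ((T v).card : ℝ) / Fintype.card α =
      ∏ i, ((U i).card : ℝ) / Fintype.card α := by
    have h4 : ∀ i ∈ Finset.univ, i ∉ S.image g → ((U i).card : ℝ) / Fintype.card α = 1 := by
      intro i _ hi
      have : U i = Finset.univ := by
        refine Finset.eq_univ_iff_forall.2 fun a => Finset.mem_filter.2 ⟨Finset.mem_univ _, ?_⟩
        rintro v hv rfl
        exact absurd (Finset.mem_image_of_mem g hv) hi
      rw [this, Finset.card_univ, div_self hα]
    rw [← Finset.prod_subset (Finset.subset_univ (S.image g)) h4, Finset.prod_image hg]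
    exact Finset.prod_congr rfl fun v hv => by rw [h2 v hv]
  rw [h3, Finset.prod_div_distrib, Finset.prod_const, Finset.card_univ]
  exact (mul_div_cancel₀ _ (pow_ne_zero _ hα)).symm

/-- Let each `v` own the set of blocks `(x, h)` with `h (f v x) < P`. If the words `f v`, `v ∈ S`,
pairwise agree in at most `t` of the `n` coordinates, then every membership pattern of the owned
sets over `S` occurs at least about as often as for independent sets of density `P / Z`. -/
theorem card_pattern_ge {V : Type*} {n ρ Z : ℕ} (hZ : 0 < Z) (P : ℕ) (hP : P ≤ Z)
    (f : V → Fin n → Fin ρ) (S : Finset V) (t N : ℕ) (hN : S.card ≤ N)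
    (ht : ∀ u ∈ S, ∀ v ∈ S, u ≠ v → (Finset.univ.filter fun x => f u x = f v x).card ≤ t)
    (Q : V → Prop) [DecidablePred Q] :
    ((n : ℝ) - N * N * t) * (Z : ℝ) ^ ρ *
        ∏ v ∈ S, (if Q v then (P : ℝ) / Z else 1 - (P : ℝ) / Z) ≤
      ((Finset.univ.filter fun b : Fin n × (Fin ρ → Fin Z) =>
        ∀ v ∈ S, ((b.2 (f v b.1)).val < P ↔ Q v)).card : ℝ) := by
  classical
  have hZ' : (0 : ℝ) < Z := by exact_mod_cast hZ
  have : Nonempty (Fin Z) := ⟨⟨0, hZ⟩⟩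
  have hcardP : (Finset.univ.filter fun z : Fin Z => z.val < P).card = P := by
    rw [Fin.card_filter_val_lt, min_eq_right hP]
  have hcardP' : (Finset.univ.filter fun z : Fin Z => ¬ z.val < P).card = Z - P := by
    have := Finset.card_filter_add_card_filter_not (s := (Finset.univ : Finset (Fin Z)))
      (p := fun z => z.val < P)
    rw [Finset.card_univ, Fintype.card_fin] at this
    omega
  let T : V → Finset (Fin Z) := fun v =>
    if Q v then Finset.univ.filter fun z => z.val < P else Finset.univ.filter fun z => ¬ z.val < P
  have hT : ∀ v, ((T v).card : ℝ) / (Fintype.card (Fin Z)) =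
      if Q v then (P : ℝ) / Z else 1 - (P : ℝ) / Z := by
    intro v
    simp only [T, Fintype.card_fin]
    split_ifs
    · rw [hcardP]
    · rw [hcardP', Nat.cast_sub hP]; field_simp
  have hTm : ∀ v (z : Fin Z), z ∈ T v ↔ (z.val < P ↔ Q v) := by
    intro v z
    simp only [T]
    split_ifs with h <;> simp [h]
  set pr := ∏ v ∈ S, (if Q v then (P : ℝ) / Z else 1 - (P : ℝ) / Z) with hpr
  have hp1 : (P : ℝ) / Z ≤ 1 := by
    rw [div_le_one hZ']; exact_mod_cast hP
  have hpr0 : 0 ≤ pr := by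
    refine Finset.prod_nonneg fun v _ => ?_
    split_ifs
    · positivity
    · linarith
  let good : Finset (Fin n) := Finset.univ.filter fun x => Set.InjOn (fun v => f v x) S
  have hgood : (n : ℝ) - N * N * t ≤ good.card := by
    have h1 : (Finset.univ \ good) ⊆ S.offDiag.biUnion
        fun q => Finset.univ.filter fun x => f q.1 x = f q.2 x := by
      intro x hx
      have hx' : ¬ Set.InjOn (fun v => f v x) S := fun h =>
        (Finset.mem_sdiff.1 hx).2 (Finset.mem_filter.2 ⟨Finset.mem_univ _, h⟩)
      simp only [Set.InjOn] at hx'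
      push Not at hx'
      obtain ⟨u, hu, v, hv, huv, hne⟩ := hx'
      exact Finset.mem_biUnion.2 ⟨(u, v), Finset.mem_offDiag.2 ⟨hu, hv, hne⟩, by simpa using huv⟩
    have h2 := (Finset.card_le_card h1).trans (Finset.card_biUnion_le_card_mul _ _ t (by
      intro q hq
      have := Finset.mem_offDiag.1 hq
      exact ht _ this.1 _ this.2.1 this.2.2))
    rw [Finset.card_sdiff_of_subset (Finset.subset_univ _), Finset.card_univ, Fintype.card_fin,
      Finset.offDiag_card] at h2
    have h3 : (S.card * S.card - S.card) * t ≤ N * N * t :=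
      Nat.mul_le_mul_right _ ((Nat.sub_le _ _).trans (Nat.mul_le_mul hN hN))
    have h4 : n ≤ good.card + N * N * t := by omega
    have h5 : (n : ℝ) ≤ good.card + N * N * t := by exact_mod_cast h4
    linarith
  have hx : ∀ x ∈ good, (Z : ℝ) ^ ρ * pr =
      ((Finset.univ.filter fun h : Fin ρ → Fin Z => ∀ v ∈ S, ((h (f v x)).val < P ↔ Q v)).card : ℝ) := by
    intro x hx
    have h1 := card_fun_constrained S (fun v => f v x) (Finset.mem_filter.1 hx).2 T
    simp only [hTm, hT] at h1
    rw [Fintype.card_fin, Fintype.card_fin] at h1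
    rw [← h1, ← Set.ncard_coe_finset, Finset.coe_filter_univ]
  have hsum : (∑ x ∈ good,
      (Finset.univ.filter fun h : Fin ρ → Fin Z => ∀ v ∈ S, ((h (f v x)).val < P ↔ Q v)).card) ≤
      (Finset.univ.filter fun b : Fin n × (Fin ρ → Fin Z) =>
        ∀ v ∈ S, ((b.2 (f v b.1)).val < P ↔ Q v)).card := by
    rw [← Finset.card_sigma]
    refine Finset.card_le_card_of_injOn (fun y => (y.1, y.2)) ?_ ?_
    · rintro ⟨x, h⟩ hy
      simp only [Finset.coe_sigma, Set.mem_sigma_iff, Finset.coe_filter, Finset.mem_univ,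
        true_and, Set.mem_ofPred_eq, Finset.mem_coe] at hy ⊢
      exact hy.2
    · rintro ⟨x, h⟩ _ ⟨x', h'⟩ _ he
      simp only [Prod.mk.injEq] at he
      obtain ⟨rfl, rfl⟩ := he
      rfl
  calc ((n : ℝ) - N * N * t) * (Z : ℝ) ^ ρ * pr ≤ good.card * (Z : ℝ) ^ ρ * pr := by gcongr
    _ = ∑ x ∈ good, (Z : ℝ) ^ ρ * pr := by rw [Finset.sum_const, nsmul_eq_mul]; ring
    _ = _ := Finset.sum_congr rfl hx
    _ ≤ _ := by exact_mod_cast hsum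

/-! ### Cyclic covers of neighbourhoods -/

/-- A set with more than `L` elements splits into parts of bounded size, on each of which
there are `L` cyclic shifts `pred · r` without fixed points, pairwise disagreeing everywhere. -/
theorem exists_ring {V : Type*} [DecidableEq V] (L : ℕ) (N : Finset V) (hN : L + 1 ≤ N.card) :
    ∃ (cov pred : V → Fin L → V) (part : V → V),
      (∀ v ∈ N, part v ∈ N) ∧
      (∀ v ∈ N, ∀ r, cov v r ∈ N ∧ pred v r ∈ N ∧ pred (cov v r) r = v ∧ pred v r ≠ v ∧
        part (pred v r) = part v) ∧
      (∀ v ∈ N, Function.Injective (pred v)) ∧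
      ∀ k, (N.filter fun v => part v = k).card ≤ 2 * (L + 1) := by
  induction hn : N.card using Nat.strong_induction_on generalizing N with
  | _ n ih =>
  subst hn
  by_cases hbig : N.card ≤ 2 * (L + 1)
  · obtain ⟨v₀, hv₀⟩ : N.Nonempty := Finset.card_pos.1 (by omega)
    set g := N.card with hg
    have : NeZero g := ⟨by omega⟩
    have e : N ≃ ZMod g := Fintype.equivOfCardEq (by rw [Fintype.card_coe, ZMod.card])
    have hr : ∀ r r' : ℕ, r < g → r' < g → ((r : ZMod g) = r') → r = r' := by
      intro r r' h h' heq
      rw [ZMod.natCast_eq_natCast_iff'] at heq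
      rwa [Nat.mod_eq_of_lt h, Nat.mod_eq_of_lt h'] at heq
    refine ⟨fun v r => if h : v ∈ N then (e.symm (e ⟨v, h⟩ - ((r.val + 1 : ℕ) : ZMod g))).1 else v,
      fun v r => if h : v ∈ N then (e.symm (e ⟨v, h⟩ + ((r.val + 1 : ℕ) : ZMod g))).1 else v,
      fun _ => v₀, fun _ _ => hv₀, ?_, ?_, ?_⟩
    · intro v hv r
      have hrlt := r.2
      simp only [hv, dif_pos]
      refine ⟨Subtype.coe_prop _, Subtype.coe_prop _, ?_, ?_, trivial⟩
      · simp
      · intro h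
        have h1 : e.symm (e ⟨v, hv⟩ + ((r.val + 1 : ℕ) : ZMod g)) = ⟨v, hv⟩ := Subtype.ext h
        rw [Equiv.symm_apply_eq] at h1
        have h2 : ((r.val + 1 : ℕ) : ZMod g) = ((0 : ℕ) : ZMod g) := by
          simpa using h1
        have := hr _ _ (by omega) (by omega) h2
        omega
    · intro v hv r r' h
      have hrlt := r.2
      have hrlt' := r'.2
      simp only [hv, dif_pos] at h
      have h1 := e.symm.injective (Subtype.ext h)
      have h2 := hr _ _ (by omega) (by omega) (add_left_cancel h1)
      exact Fin.ext (by omega)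
    · intro k
      exact (Finset.card_filter_le _ _).trans hbig
  · obtain ⟨N₁, hN₁, hc₁⟩ := Finset.exists_subset_card_eq (s := N) (n := L + 1) (by omega)
    have hc₂ : (N \ N₁).card = N.card - (L + 1) := by
      rw [Finset.card_sdiff_of_subset hN₁, hc₁]
    obtain ⟨cov₁, pred₁, part₁, hp₁, hr₁, hi₁, hs₁⟩ := ih _ (by omega) N₁ (by omega) rfl
    obtain ⟨cov₂, pred₂, part₂, hp₂, hr₂, hi₂, hs₂⟩ := ih _ (by omega) (N \ N₁) (by omega) rfl
    have hsplit : ∀ v ∈ N, v ∉ N₁ → v ∈ N \ N₁ := fun v h h' => Finset.mem_sdiff.2 ⟨h, h'⟩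
    have hnot : ∀ v ∈ N \ N₁, v ∉ N₁ := fun v h => (Finset.mem_sdiff.1 h).2
    have hback : ∀ v ∈ N \ N₁, v ∈ N := fun v h => (Finset.mem_sdiff.1 h).1
    refine ⟨fun v r => if v ∈ N₁ then cov₁ v r else cov₂ v r,
      fun v r => if v ∈ N₁ then pred₁ v r else pred₂ v r,
      fun v => if v ∈ N₁ then part₁ v else part₂ v, ?_, ?_, ?_, ?_⟩
    · intro v hv
      by_cases h : v ∈ N₁
      · simp only [h, if_true]; exact hN₁ (hp₁ v h)
      · simp only [h, if_false]; exact hback _ (hp₂ v (hsplit v hv h))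
    · intro v hv r
      by_cases h : v ∈ N₁
      · obtain ⟨h1, h2, h3, h4, h5⟩ := hr₁ v h r
        simp only [h, h1, h2, if_true]
        exact ⟨hN₁ h1, hN₁ h2, h3, h4, h5⟩
      · obtain ⟨h1, h2, h3, h4, h5⟩ := hr₂ v (hsplit v hv h) r
        simp only [h, hnot _ h1, hnot _ h2, if_false]
        exact ⟨hback _ h1, hback _ h2, h3, h4, h5⟩
    · intro v hv
      by_cases h : v ∈ N₁
      · simp only [h, if_true]; exact hi₁ v h
      · simp only [h, if_false]; exact hi₂ v (hsplit v hv h)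
    · intro k
      by_cases hk : k ∈ N₁
      · refine (Finset.card_le_card ?_).trans (hs₁ k)
        intro v hv
        obtain ⟨hv, hvk⟩ := Finset.mem_filter.1 hv
        by_cases h : v ∈ N₁
        · simp only [h, if_true] at hvk
          exact Finset.mem_filter.2 ⟨h, hvk⟩
        · simp only [h, if_false] at hvk
          exact absurd (hvk ▸ hp₂ v (hsplit v hv h)) fun h' => hnot _ h' hk
      · refine (Finset.card_le_card ?_).trans (hs₂ k)
        intro v hv
        obtain ⟨hv, hvk⟩ := Finset.mem_filter.1 hv
        by_cases h : v ∈ N₁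
        · simp only [h, if_true] at hvk
          exact absurd (hvk ▸ hp₁ v h) hk
        · simp only [h, if_false] at hvk
          exact Finset.mem_filter.2 ⟨hsplit v hv h, hvk⟩

/-! ### Frames: owned blocks and admissible blocks of an edge -/

/-- `u` and `v` are at distance at most three. -/
def Near {V : Type*} (G : SimpleGraph V) (u v : V) : Prop :=
  ∃ a b, (u = a ∨ G.Adj u a) ∧ (a = b ∨ G.Adj a b) ∧ (b = v ∨ G.Adj b v)

open scoped Classical in
/-- The data steering the distribution of edges to blocks. Every vertex `v` owns a set `A v` of
blocks; on any few vertices close to each other, the owned sets behave like independent sets of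
density `p` (`pattern`). The neighbourhood of every *ring vertex* carries `L` shifts `cov · r` with
inverses `pred · r`, respecting a partition into small parts. -/
structure Frame {V : Type*} (G : SimpleGraph V) (B : Type*) [Fintype B] (L : ℕ) where
  /-- The blocks owned by a vertex. -/
  A : V → B → Prop
  /-- The ring vertices. -/
  ring : V → Prop
  /-- The shifts of the neighbourhood of a vertex. -/
  cov : V → V → Fin L → V
  /-- The inverse shifts. -/
  pred : V → V → Fin L → V
  /-- The label of the part of a neighbour. -/
  part : V → V → V
  cov_adj : ∀ u v r, ring u → G.Adj u v → G.Adj u (cov u v r)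
  pred_adj : ∀ u v r, ring u → G.Adj u v → G.Adj u (pred u v r)
  pred_cov : ∀ u v r, ring u → G.Adj u v → pred u (cov u v r) r = v
  pred_ne : ∀ u v r, ring u → G.Adj u v → pred u v r ≠ v
  part_pred : ∀ u v r, ring u → G.Adj u v → part u (pred u v r) = part u v
  pred_inj : ∀ u v, ring u → G.Adj u v → Function.Injective (pred u v)
  card_part : ∀ u k, {v | G.Adj u v ∧ part u v = k}.ncard ≤ 2 * (L + 1)
  /-- The density of the owned sets. -/
  p : ℝ
  /-- Slightly less than the number of blocks. -/
  lam : ℝ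
  p_pos : 0 < p
  p_lt : p < 1
  lam_pos : 0 < lam
  pattern : ∀ (S : Finset V) (Q : V → Prop), S.card ≤ L + 2 →
    (∀ u ∈ S, ∀ v ∈ S, u ≠ v → Near G u v) →
    lam * ∏ v ∈ S, (if Q v then p else 1 - p) ≤
      {b | ∀ v ∈ S, (A v b ↔ Q v)}.ncard

namespace Frame

variable {V B : Type*} [Fintype B] {G : SimpleGraph V} {L : ℕ} (F : Frame G B L)

/-- The blocks admissible for an edge `uw`, `w` being an end of high degree, when the ring vertex
`u` has assigned the shift `σ v` to its neighbour `v`. The block is not owned by `w`; for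
non-ring `u` it is not owned by `u`; for ring `u` it is owned by those neighbours `v` of `u` whose
assigned shift leads to `w`, and not by the other neighbours some shift of which leads to `w`. -/
def ok (σ : V → Fin L) (u w : V) (b : B) : Prop :=
  ¬ F.A w b ∧ (F.ring u → ∀ r, (F.A (F.pred u w r) b ↔ σ (F.pred u w r) = r)) ∧
    (¬ F.ring u → ¬ F.A u b)

open scoped Classical in
/-- The set of admissible blocks. -/
noncomputable def okSet (σ : V → Fin L) (u w : V) : Finset B :=
  Finset.univ.filter fun b => F.ok σ u w b

theorem mem_okSet {σ : V → Fin L} {u w : V} {b : B} : b ∈ F.okSet σ u w ↔ F.ok σ u w b := by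
  classical
  simp [okSet]

open scoped Classical in
/-- The uniform distribution on the admissible blocks. -/
noncomputable def q (σ : V → Fin L) (u w : V) (b : B) : ℝ :=
  if F.ok σ u w b then ((F.okSet σ u w).card : ℝ)⁻¹ else 0

theorem q_nonneg (σ : V → Fin L) (u w : V) (b : B) : 0 ≤ F.q σ u w b := by
  unfold q; split_ifs <;> positivity

open scoped Classical in
/-- The average of the distributions `q` over all assignments of shifts. -/
noncomputable def qbar [Fintype V] (u w : V) (b : B) : ℝ :=
  (∑ σ : V → Fin L, F.q σ u w b) / (L : ℝ) ^ Fintype.card V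

open scoped Classical in
theorem okSet_card_ge_ring (σ : V → Fin L) {u w : V} (hu : F.ring u) (huw : G.Adj u w) :
    F.lam * ((1 - F.p) * ∏ r, (if σ (F.pred u w r) = r then F.p else 1 - F.p)) ≤
      (F.okSet σ u w).card := by
  let Q : V → Prop := fun x => ∃ r, x = F.pred u w r ∧ σ x = r
  have hinj := F.pred_inj u w hu huw
  have hw : w ∉ Finset.univ.image (F.pred u w) := by
    intro h
    obtain ⟨r, -, hr⟩ := Finset.mem_image.1 h
    exact F.pred_ne u w r hu huw hr
  have hQw : ¬ Q w := fun ⟨r, hr, _⟩ => F.pred_ne u w r hu huw hr.symm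
  have hQ : ∀ r, Q (F.pred u w r) ↔ σ (F.pred u w r) = r := by
    intro r
    constructor
    · rintro ⟨r', h1, h2⟩; rw [hinj h1]; rw [hinj h1] at h2; exact h2
    · intro h; exact ⟨r, rfl, h⟩
  have hadj : ∀ x ∈ insert w (Finset.univ.image (F.pred u w)), G.Adj u x := by
    intro x hx
    rcases Finset.mem_insert.1 hx with rfl | hx
    · exact huw
    · obtain ⟨r, -, rfl⟩ := Finset.mem_image.1 hx
      exact F.pred_adj u w r hu huw
  have h1 := F.pattern (insert w (Finset.univ.image (F.pred u w))) Q
    (by rw [Finset.card_insert_of_notMem hw, Finset.card_image_of_injective _ hinj,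
          Finset.card_univ, Fintype.card_fin]; omega)
    (fun x hx y hy _ => ⟨u, u, Or.inr (hadj x hx).symm, Or.inl rfl, Or.inr (hadj y hy)⟩)
  rw [Finset.prod_insert hw, Finset.prod_image (fun a _ b _ h => hinj h)] at h1
  simp only [hQ, hQw, if_false] at h1
  refine h1.trans ?_
  rw [← Set.ncard_coe_finset]
  refine Nat.cast_le.2 (Set.ncard_le_ncard (fun b hb => ?_) (Set.toFinite _))
  rw [Set.mem_ofPred_eq] at hb
  refine Finset.mem_coe.2 <| F.mem_okSet.2 ⟨fun h => hQw ((hb w (Finset.mem_insert_self _ _)).1 h), fun _ r => ?_,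
    fun h => absurd hu h⟩
  rw [← hQ r]
  exact hb _ (Finset.mem_insert_of_mem (Finset.mem_image_of_mem _ (Finset.mem_univ _)))

open scoped Classical in
theorem okSet_card_ge_not_ring (σ : V → Fin L) {u w : V} (hu : ¬ F.ring u) (huw : G.Adj u w) :
    F.lam * ((1 - F.p) * (1 - F.p)) ≤ (F.okSet σ u w).card := by
  have h1 := F.pattern {u, w} (fun _ => False)
    ((Finset.card_le_two).trans (by omega)) (by
      intro x hx y hy hxy
      simp only [Finset.mem_insert, Finset.mem_singleton] at hx hy
      refine ⟨x, x, Or.inl rfl, Or.inl rfl, Or.inr ?_⟩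
      rcases hx with rfl | rfl <;> rcases hy with rfl | rfl
      · exact absurd rfl hxy
      · exact huw
      · exact huw.symm
      · exact absurd rfl hxy)
  rw [Finset.prod_pair huw.ne] at h1
  simp only [if_false] at h1
  refine h1.trans ?_
  rw [← Set.ncard_coe_finset]
  refine Nat.cast_le.2 (Set.ncard_le_ncard (fun b hb => ?_) (Set.toFinite _))
  rw [Set.mem_ofPred_eq] at hb
  exact Finset.mem_coe.2 <| F.mem_okSet.2 ⟨fun h => (hb w (by simp)).1 h, fun h => absurd h hu,
    fun _ h => (hb u (by simp)).1 h⟩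

theorem okSet_nonempty (σ : V → Fin L) {u w : V} (huw : G.Adj u w) : (F.okSet σ u w).Nonempty := by
  classical
  have hp := F.p_pos
  have hp1 := F.p_lt
  have hl := F.lam_pos
  have h1p : 0 < 1 - F.p := by linarith
  rw [← Finset.card_pos]
  have : (0 : ℝ) < (F.okSet σ u w).card := by
    by_cases hu : F.ring u
    · refine lt_of_lt_of_le ?_ (F.okSet_card_ge_ring σ hu huw)
      refine mul_pos hl (mul_pos h1p (Finset.prod_pos fun r _ => ?_))
      split_ifs <;> assumption
    · refine lt_of_lt_of_le ?_ (F.okSet_card_ge_not_ring σ hu huw)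
      positivity
  exact_mod_cast this

open scoped Classical in
theorem sum_q (σ : V → Fin L) {u w : V} (huw : G.Adj u w) : ∑ b, F.q σ u w b = 1 := by
  have h := F.okSet_nonempty σ huw
  have hc : ((F.okSet σ u w).card : ℝ) ≠ 0 := by exact_mod_cast (Finset.card_pos.2 h).ne'
  simp only [q]
  rw [← Finset.sum_filter, Finset.sum_const, nsmul_eq_mul]
  exact mul_inv_cancel₀ hc

/-- Averaging over the shifts makes every block about equally likely, although for fixed shifts only
few blocks are admissible at a ring vertex. -/
theorem qbar_le [Fintype V] (hL : 1 ≤ L) (μ Cap : ℝ) (hμ1 : 1 / (L : ℝ) ≤ μ * F.p)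
    (hμ2 : 1 - 1 / (L : ℝ) ≤ μ * (1 - F.p)) (hC1 : 1 ≤ Cap * ((1 - F.p) * (1 - F.p)))
    (hC2 : μ ^ L ≤ Cap * (1 - F.p)) {u w : V} (huw : G.Adj u w) (b : B) :
    F.qbar u w b ≤ Cap / F.lam := by
  classical
  have hp := F.p_pos
  have hp1 := F.p_lt
  have hl := F.lam_pos
  have h1p : 0 < 1 - F.p := by linarith
  have hLr : (0 : ℝ) < L := by exact_mod_cast hL
  have hCap : 0 < Cap := by
    by_contra h
    have : Cap * ((1 - F.p) * (1 - F.p)) ≤ 0 :=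
      mul_nonpos_of_nonpos_of_nonneg (not_lt.1 h) (by positivity)
    linarith
  have hpow : (0 : ℝ) < (L : ℝ) ^ Fintype.card V := by positivity
  have : Nonempty (Fin L) := ⟨⟨0, hL⟩⟩
  unfold qbar
  rw [div_le_iff₀ hpow]
  by_cases hu : F.ring u
  · set W := ∏ r, (if F.A (F.pred u w r) b then F.p else 1 - F.p) with hW
    have hWpos : 0 < W := Finset.prod_pos fun r _ => by split_ifs <;> assumption
    let T : Fin L → Finset (Fin L) := fun r =>
      if F.A (F.pred u w r) b then {r} else Finset.univ.filter fun r' => r' ≠ r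
    have hT : ∀ r, ((T r).card : ℝ) / Fintype.card (Fin L) =
        if F.A (F.pred u w r) b then 1 / (L : ℝ) else 1 - 1 / (L : ℝ) := by
      intro r
      simp only [T, Fintype.card_fin]
      split_ifs
      · simp
      · rw [Finset.filter_ne', Finset.card_erase_of_mem (Finset.mem_univ _), Finset.card_univ,
          Fintype.card_fin, Nat.cast_sub hL]
        field_simp
        simp
    have hcount := card_fun_constrained (Finset.univ : Finset (Fin L)) (F.pred u w)
      (fun a _ b _ h => F.pred_inj u w hu huw h) T
    simp only [hT] at hcount
    rw [Fintype.card_fin] at hcount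
    have hcount' : ∀ s : Finset (V → Fin L), (∀ σ, σ ∈ s ↔ ∀ r ∈ (Finset.univ : Finset (Fin L)),
        σ (F.pred u w r) ∈ T r) → (s.card : ℝ) = (L : ℝ) ^ Fintype.card V *
          ∏ r, (if F.A (F.pred u w r) b then 1 / (L : ℝ) else 1 - 1 / (L : ℝ)) := by
      intro s hs
      rw [← hcount]
      rw [← Set.ncard_coe_finset]
      congr 2
      ext σ
      exact hs σ
    have hq : ∀ σ : V → Fin L, F.q σ u w b ≤
        if ∀ r ∈ (Finset.univ : Finset (Fin L)), σ (F.pred u w r) ∈ T r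
          then (F.lam * ((1 - F.p) * W))⁻¹ else 0 := by
      intro σ
      unfold q
      by_cases hok : F.ok σ u w b
      · have hiff := hok.2.1 hu
        rw [if_pos hok, if_pos]
        · refine inv_anti₀ (by positivity) ?_
          have h1 := F.okSet_card_ge_ring σ hu huw
          simp only [← hiff] at h1
          exact h1
        · intro r _
          simp only [T]
          split_ifs with h
          · exact Finset.mem_singleton.2 ((hiff r).1 h)
          · exact Finset.mem_filter.2 ⟨Finset.mem_univ _, fun h' => h ((hiff r).2 h')⟩
      · rw [if_neg hok]
        split_ifs <;> positivity
    refine (Finset.sum_le_sum fun σ _ => hq σ).trans ?_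
    rw [← Finset.sum_filter, Finset.sum_const, nsmul_eq_mul, hcount' _ (fun σ => by simp)]
    have hprod : ∏ r, (if F.A (F.pred u w r) b then 1 / (L : ℝ) else 1 - 1 / (L : ℝ)) ≤
        μ ^ L * W := by
      have : μ ^ L = ∏ _r : Fin L, μ := by simp
      rw [this, hW, ← Finset.prod_mul_distrib]
      refine Finset.prod_le_prod (fun r _ => ?_) fun r _ => ?_
      · split_ifs
        · positivity
        · rw [sub_nonneg, div_le_one hLr]; exact_mod_cast hL
      · split_ifs <;> assumption
    calc (L : ℝ) ^ Fintype.card V *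
          (∏ r, (if F.A (F.pred u w r) b then 1 / (L : ℝ) else 1 - 1 / (L : ℝ))) *
          (F.lam * ((1 - F.p) * W))⁻¹
        ≤ (L : ℝ) ^ Fintype.card V * (μ ^ L * W) * (F.lam * ((1 - F.p) * W))⁻¹ := by gcongr
      _ = μ ^ L / (1 - F.p) / F.lam * (L : ℝ) ^ Fintype.card V := by field_simp
      _ ≤ Cap / F.lam * (L : ℝ) ^ Fintype.card V := by
        gcongr
        rwa [div_le_iff₀ h1p]
  · have hq : ∀ σ : V → Fin L, F.q σ u w b ≤ Cap / F.lam := by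
      intro σ
      unfold q
      split_ifs
      · refine (inv_anti₀ (by positivity) (F.okSet_card_ge_not_ring σ hu huw)).trans ?_
        rw [inv_le_comm₀ (by positivity) (by positivity), inv_div, div_le_iff₀ hCap]
        nlinarith
      · positivity
    refine (Finset.sum_le_sum fun σ _ => hq σ).trans ?_
    rw [Finset.sum_const, nsmul_eq_mul, Finset.card_univ, Fintype.card_fun, Fintype.card_fin,
      mul_comm]
    push_cast
    exact le_rfl

/-- If `v` is not one of the inverse shifts of `w`, then it owns a fair share of the blocks
admissible for `uw`. -/
theorem lam_mul_pow_le (σ : V → Fin L) (hL : 1 ≤ L) (pm : ℝ) (hpm : 0 < pm) (hpm1 : pm ≤ F.p)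
    (hpm2 : pm ≤ 1 - F.p) {u w v : V} (huw : G.Adj u w) (hwv : G.Adj w v) (huv : u ≠ v)
    (hv : F.ring u → ∀ r, v ≠ F.pred u w r) :
    F.lam * pm ^ (L + 2) ≤ {b | F.ok σ u w b ∧ F.A v b}.ncard := by
  classical
  have hprod : ∀ (S : Finset V) (Q : V → Prop), S.card ≤ L + 2 →
      F.lam * pm ^ (L + 2) ≤ F.lam * ∏ v ∈ S, (if Q v then F.p else 1 - F.p) := by
    intro S Q hS
    refine mul_le_mul_of_nonneg_left ?_ F.lam_pos.le
    have hp1 := F.p_lt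
    refine (pow_le_pow_of_le_one hpm.le (by linarith [F.p_pos]) hS).trans ?_
    rw [← Finset.prod_const]
    exact Finset.prod_le_prod (fun _ _ => hpm.le) fun x _ => by split_ifs <;> assumption
  by_cases hu : F.ring u
  · let Q : V → Prop := fun x => x = v ∨ ∃ r, x = F.pred u w r ∧ σ x = r
    have hinj := F.pred_inj u w hu huw
    have hQw : ¬ Q w := by
      rintro (h | ⟨r, hr, _⟩)
      · exact hwv.ne h
      · exact F.pred_ne u w r hu huw hr.symm
    have hQ : ∀ r, Q (F.pred u w r) ↔ σ (F.pred u w r) = r := by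
      intro r
      constructor
      · rintro (h | ⟨r', h1, h2⟩)
        · exact absurd h.symm (hv hu r)
        · rw [hinj h1]; rw [hinj h1] at h2; exact h2
      · intro h; exact Or.inr ⟨r, rfl, h⟩
    let S₀ : Finset V := insert w (Finset.univ.image (F.pred u w))
    have hS₀ : S₀.card ≤ L + 1 := by
      refine (Finset.card_insert_le _ _).trans (Nat.succ_le_succ ?_)
      exact Finset.card_image_le.trans (by simp)
    have hadj : ∀ x ∈ S₀, G.Adj u x := by
      intro x hx
      rcases Finset.mem_insert.1 hx with rfl | hx
      · exact huw
      · obtain ⟨r, -, rfl⟩ := Finset.mem_image.1 hx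
        exact F.pred_adj u w r hu huw
    have hS : (insert v S₀).card ≤ L + 2 :=
      (Finset.card_insert_le _ _).trans (Nat.succ_le_succ hS₀)
    refine (hprod _ Q hS).trans ((F.pattern (insert v S₀) Q hS ?_).trans ?_)
    · intro x hx y hy hxy
      rcases Finset.mem_insert.1 hx with hxv | hx'
      · rcases Finset.mem_insert.1 hy with hyv | hy'
        · exact absurd (hxv.trans hyv.symm) hxy
        · exact ⟨w, u, Or.inr (hxv ▸ hwv.symm), Or.inr huw.symm, Or.inr (hadj y hy')⟩
      · rcases Finset.mem_insert.1 hy with hyv | hy'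
        · exact ⟨u, w, Or.inr (hadj x hx').symm, Or.inr huw, Or.inr (hyv ▸ hwv)⟩
        · exact ⟨u, u, Or.inr (hadj x hx').symm, Or.inl rfl, Or.inr (hadj y hy')⟩
    · refine Nat.cast_le.2 (Set.ncard_le_ncard (fun b hb => ?_) (Set.toFinite _))
      rw [Set.mem_ofPred_eq] at hb ⊢
      have hbS : ∀ x ∈ S₀, (F.A x b ↔ Q x) := fun x hx => hb x (Finset.mem_insert_of_mem hx)
      refine ⟨⟨fun h => hQw ((hbS w (Finset.mem_insert_self _ _)).1 h), fun _ r => ?_,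
        fun h => absurd hu h⟩, (hb v (Finset.mem_insert_self _ _)).2 (Or.inl rfl)⟩
      rw [← hQ r]
      exact hbS _ (Finset.mem_insert_of_mem (Finset.mem_image_of_mem _ (Finset.mem_univ _)))
  · have hS : ({u, w, v} : Finset V).card ≤ L + 2 := Finset.card_le_three.trans (by omega)
    refine (hprod _ (fun x => x = v) hS).trans ((F.pattern {u, w, v} (fun x => x = v) hS ?_).trans ?_)
    · have h1 : ∀ x ∈ ({u, w, v} : Finset V), w = x ∨ G.Adj w x := by
        intro x hx
        simp only [Finset.mem_insert, Finset.mem_singleton] at hx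
        rcases hx with rfl | rfl | rfl
        · exact Or.inr huw.symm
        · exact Or.inl rfl
        · exact Or.inr hwv
      intro x hx y hy _
      exact ⟨w, w, (h1 x hx).imp Eq.symm SimpleGraph.Adj.symm, Or.inl rfl, h1 y hy⟩
    · refine Nat.cast_le.2 (Set.ncard_le_ncard (fun b hb => ?_) (Set.toFinite _))
      rw [Set.mem_ofPred_eq] at hb ⊢
      exact ⟨⟨fun h => hwv.ne ((hb w (by simp)).1 h), fun h => absurd h hu,
        fun _ h => huv ((hb u (by simp)).1 h)⟩, (hb v (by simp)).2 rfl⟩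

open scoped Classical in
/-- On average, an edge `uw` goes to a block owned by a given other neighbour `v` of `w` with
probability bounded from below. -/
theorem le_sum_qbar [Fintype V] (hL : 1 ≤ L) (pm : ℝ) (hpm : 0 < pm) (hpm1 : pm ≤ F.p)
    (hpm2 : pm ≤ 1 - F.p) (c : ℝ) (hc1 : c ≤ 1 / L)
    (hc2 : c * Fintype.card B ≤ F.lam * pm ^ (L + 2))
    {u w v : V} (huw : G.Adj u w) (hwv : G.Adj w v) (huv : u ≠ v) :
    c ≤ ∑ b, if F.A v b then F.qbar u w b else 0 := by
  have hLr : (0 : ℝ) < L := by exact_mod_cast hL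
  have hpow : (0 : ℝ) < (L : ℝ) ^ Fintype.card V := by positivity
  have : Nonempty (Fin L) := ⟨⟨0, hL⟩⟩
  let own : (V → Fin L) → ℝ := fun σ => ∑ b, if F.A v b then F.q σ u w b else 0
  have hown0 : ∀ σ, 0 ≤ own σ := fun σ => Finset.sum_nonneg fun b _ => by
    split_ifs
    · exact F.q_nonneg _ _ _ _
    · exact le_rfl
  have hsum : ∑ b, (if F.A v b then F.qbar u w b else 0) =
      (∑ σ, own σ) / (L : ℝ) ^ Fintype.card V := by
    simp only [own, qbar]
    rw [Finset.sum_comm, Finset.sum_div]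
    refine Finset.sum_congr rfl fun b _ => ?_
    split_ifs <;> simp
  rw [hsum, le_div_iff₀ hpow]
  by_cases hv : F.ring u ∧ ∃ r, v = F.pred u w r
  · obtain ⟨hu, r, hr⟩ := hv
    have h1 : ∀ σ : V → Fin L, (if σ v = r then (1 : ℝ) else 0) ≤ own σ := by
      intro σ
      split_ifs with hσ
      · rw [← F.sum_q σ huw]
        refine Finset.sum_le_sum fun b _ => ?_
        split_ifs with hb
        · exact le_rfl
        · unfold q
          rw [if_neg]
          intro hok
          refine hb ?_
          rw [hr]
          exact (hok.2.1 hu r).2 (by rw [← hr]; exact hσ)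
      · exact hown0 σ
    refine le_trans ?_ (Finset.sum_le_sum fun σ _ => h1 σ)
    have h2 := card_fun_constrained (ι := V) ({()} : Finset Unit) (fun _ => v) (by simp)
      (fun _ => ({r} : Finset (Fin L)))
    simp only [Finset.mem_singleton, forall_const, Finset.prod_singleton, Finset.card_singleton,
      Fintype.card_fin, Nat.cast_one] at h2
    rw [Finset.sum_boole, ← Set.ncard_coe_finset, Finset.coe_filter_univ, h2, mul_comm]
    gcongr
  · have h1 : ∀ σ : V → Fin L, c ≤ own σ := by
      intro σ
      have h2 := F.lam_mul_pow_le σ hL pm hpm hpm1 hpm2 huw hwv huv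
        (fun hu r hr => hv ⟨hu, r, hr⟩)
      have hpos : (0 : ℝ) < (F.okSet σ u w).card := by
        exact_mod_cast Finset.card_pos.2 (F.okSet_nonempty σ huw)
      have h3 : own σ = ({b | F.ok σ u w b ∧ F.A v b}.ncard : ℝ) / (F.okSet σ u w).card := by
        have : ∀ b, (if F.A v b then F.q σ u w b else 0) =
            if F.ok σ u w b ∧ F.A v b then ((F.okSet σ u w).card : ℝ)⁻¹ else 0 := by
          intro b
          unfold q
          by_cases hA : F.A v b <;> by_cases hok : F.ok σ u w b <;> simp [hA, hok]
        simp only [own, this]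
        rw [← Finset.sum_filter, Finset.sum_const, nsmul_eq_mul, ← Set.ncard_coe_finset,
          Finset.coe_filter_univ, div_eq_mul_inv]
      have hle : ((F.okSet σ u w).card : ℝ) ≤ Fintype.card B := by
        exact_mod_cast Finset.card_le_univ _
      rw [h3, le_div_iff₀ hpos]
      rcases le_or_gt c 0 with hc | hc
      · exact (mul_nonpos_of_nonpos_of_nonneg hc hpos.le).trans (by positivity)
      · nlinarith
    calc c * (L : ℝ) ^ Fintype.card V = ∑ _σ : V → Fin L, c := by
          rw [Finset.sum_const, nsmul_eq_mul, Finset.card_univ, Fintype.card_fun, Fintype.card_fin]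
          push_cast; ring
      _ ≤ _ := Finset.sum_le_sum fun σ _ => h1 σ

theorem ok_congr {σ σ' : V → Fin L} {u w : V} (h : F.ring u → ∀ r,
    σ (F.pred u w r) = σ' (F.pred u w r)) (b : B) : F.ok σ u w b ↔ F.ok σ' u w b := by
  unfold ok
  refine and_congr_right fun _ => and_congr_left fun _ => ?_
  refine forall_congr' fun hu => forall_congr' fun r => ?_
  rw [h hu r]

theorem q_congr {σ σ' : V → Fin L} {u w : V} (h : F.ring u → ∀ r,
    σ (F.pred u w r) = σ' (F.pred u w r)) (b : B) : F.q σ u w b = F.q σ' u w b := by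
  classical
  have h1 : F.okSet σ u w = F.okSet σ' u w := by
    ext b'
    rw [mem_okSet, mem_okSet, F.ok_congr h]
  unfold q
  rw [h1]
  simp only [F.ok_congr h]

open scoped Classical in
/-- Shifts can be chosen for all ring vertices such that every block load at every vertex is close
to its average. -/
theorem exists_shifts [Fintype V] (hL : 1 ≤ L) : ∃ s : V → V → Fin L, ∀ v b,
    |(∑ u, if G.Adj u v then F.q (s u) u v b else 0) -
      ∑ u, if G.Adj u v then F.qbar u v b else 0| ≤ 4 * ((L : ℝ) + 1) := by
  have hLr : (0 : ℝ) < L := by exact_mod_cast hL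
  have hpow : (0 : ℝ) < (L : ℝ) ^ Fintype.card V := by positivity
  have : Nonempty (Fin L) := ⟨⟨0, hL⟩⟩
  have hcardΩ : (Fintype.card (V → Fin L) : ℝ) = (L : ℝ) ^ Fintype.card V := by
    rw [Fintype.card_fun, Fintype.card_fin]; push_cast; rfl
  -- one item for every part of every neighbourhood
  let a : V × B → V × V → (V → Fin L) → ℝ := fun vb uk σ =>
    if G.Adj uk.1 vb.1 ∧ F.part uk.1 vb.1 = uk.2 then F.q σ uk.1 vb.1 vb.2 else 0
  have ha : ∀ c i ω, 0 ≤ a c i ω := by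
    intro c i ω
    simp only [a]
    split_ifs
    · exact F.q_nonneg _ _ _ _
    · exact le_rfl
  have hcol : ∀ i ω, ∑ c, a c i ω ≤ 2 * ((L : ℝ) + 1) := by
    rintro ⟨u, k⟩ σ
    simp only [a]
    rw [Fintype.sum_prod_type]
    have h1 : ∀ v, (∑ b, if G.Adj u v ∧ F.part u v = k then F.q σ u v b else 0) =
        if G.Adj u v ∧ F.part u v = k then 1 else 0 := by
      intro v
      split_ifs with h
      · exact F.sum_q σ h.1
      · simp
    simp only [h1]
    rw [Finset.sum_boole, ← Set.ncard_coe_finset, Finset.coe_filter_univ]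
    exact_mod_cast F.card_part u k
  obtain ⟨φ, -, hφ⟩ := exists_rounding a ha (2 * ((L : ℝ) + 1)) (by positivity) hcol _
    (fun _ _ => ((L : ℝ) ^ Fintype.card V)⁻¹) (fun _ _ => by positivity)
    (fun _ => by
      rw [Finset.sum_const, nsmul_eq_mul, Finset.card_univ, hcardΩ, mul_inv_cancel₀ hpow.ne'])
    le_rfl
  refine ⟨fun u x => φ (u, F.part u x) x, fun v b => ?_⟩
  have h2 := hφ (v, b)
  have hk : ∀ (u : V) (g : V → ℝ), (∑ k, if G.Adj u v ∧ F.part u v = k then g k else 0) =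
      if G.Adj u v then g (F.part u v) else 0 := by
    intro u g
    by_cases h : G.Adj u v <;> simp [h]
  have e1 : ∑ i, a (v, b) i (φ i) =
      ∑ u, if G.Adj u v then F.q (fun x => φ (u, F.part u x) x) u v b else 0 := by
    simp only [a]
    rw [Fintype.sum_prod_type]
    refine Finset.sum_congr rfl fun u _ => ?_
    simp only
    rw [hk u (fun k => F.q (φ (u, k)) u v b)]
    split_ifs with h
    · exact F.q_congr (fun hu r => by rw [F.part_pred u v r hu h]) b
    · rfl
  have e2 : ∑ i, ∑ ω, a (v, b) i ω * ((L : ℝ) ^ Fintype.card V)⁻¹ =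
      ∑ u, if G.Adj u v then F.qbar u v b else 0 := by
    simp only [a]
    rw [Fintype.sum_prod_type]
    refine Finset.sum_congr rfl fun u _ => ?_
    simp only
    rw [← hk u (fun _ => F.qbar u v b)]
    refine Finset.sum_congr rfl fun k _ => ?_
    split_ifs with h
    · rw [← Finset.sum_mul]; rfl
    · simp
  rw [e1, e2] at h2
  linarith

open scoped Classical in
/-- Edges can be given admissible blocks such that every block load at every vertex of high degree
is close to its expectation. -/
theorem exists_blocks [Fintype V] [Nonempty B] (s : V → V → Fin L) (high : V → Prop)
    (hhigh : ∀ u, F.ring u → ¬ high u) :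
    ∃ β : Sym2 V → B, (∀ u w, G.Adj u w → high w → F.ok (s u) u w (β s(u, w))) ∧
      ∀ w, high w → ∀ b, |((Finset.univ.filter fun u => G.Adj u w ∧ β s(u, w) = b).card : ℝ) -
        ∑ u, if G.Adj u w then F.q (s u) u w b else 0| ≤ 4 := by
  let E : Sym2 V → Finset B := fun e => Finset.univ.filter fun b =>
    ∀ u w, e = s(u, w) → G.Adj u w → high w → F.ok (s u) u w b
  have hE : ∀ u w, G.Adj u w → high w → E s(u, w) = F.okSet (s u) u w := by
    intro u w huw hw
    ext b
    simp only [E, Finset.mem_filter, Finset.mem_univ, true_and, mem_okSet]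
    constructor
    · intro h; exact h u w rfl huw hw
    · intro h u' w' he _ hw'
      rcases Sym2.eq_iff.1 he with ⟨rfl, rfl⟩ | ⟨rfl, rfl⟩
      · exact h
      · have hu : ¬ F.ring u := fun hr => hhigh _ hr hw'
        have hw2 : ¬ F.ring w := fun hr => hhigh _ hr hw
        exact ⟨h.2.2 hu, fun hr => absurd hr hw2, fun _ => h.1⟩
  have hEne : ∀ e, (E e).Nonempty := by
    intro e
    by_cases h : ∃ u w, e = s(u, w) ∧ G.Adj u w ∧ high w
    · obtain ⟨u, w, rfl, huw, hw⟩ := h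
      rw [hE u w huw hw]
      exact F.okSet_nonempty _ huw
    · obtain ⟨b⟩ := ‹Nonempty B›
      refine ⟨b, Finset.mem_filter.2 ⟨Finset.mem_univ _, fun u w he huw hw => ?_⟩⟩
      exact absurd ⟨u, w, he, huw, hw⟩ h
  have hEpos : ∀ e, (0 : ℝ) < (E e).card := fun e => by
    exact_mod_cast Finset.card_pos.2 (hEne e)
  let a : V × B → Sym2 V → B → ℝ := fun vb e b =>
    if e ∈ G.edgeSet ∧ vb.1 ∈ e ∧ vb.2 = b then 1 else 0
  have ha : ∀ c i ω, 0 ≤ a c i ω := by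
    intro c i ω
    simp only [a]
    split_ifs <;> norm_num
  have hcol : ∀ i ω, ∑ c, a c i ω ≤ 2 := by
    intro e b
    induction e using Sym2.ind with
    | _ x y =>
    simp only [a]
    rw [Finset.sum_boole]
    have : (Finset.univ.filter fun vb : V × B => s(x, y) ∈ G.edgeSet ∧ vb.1 ∈ s(x, y) ∧ vb.2 = b) ⊆
        {(x, b), (y, b)} := by
      rintro ⟨v, b'⟩ h
      obtain ⟨-, h1, h2⟩ := (Finset.mem_filter.1 h).2
      simp only at h2
      subst h2
      rcases Sym2.mem_iff.1 h1 with h3 | h3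
      · simp only at h3; simp [h3]
      · simp only at h3; simp [h3]
    exact_mod_cast (Finset.card_le_card this).trans Finset.card_le_two
  obtain ⟨β, hβ, hload⟩ := exists_rounding a ha 2 (by norm_num) hcol _
    (fun e b => if b ∈ E e then ((E e).card : ℝ)⁻¹ else 0)
    (fun e b => by split_ifs <;> positivity)
    (fun e => by
      rw [Finset.sum_ite_mem, Finset.univ_inter, Finset.sum_const, nsmul_eq_mul,
        mul_inv_cancel₀ (hEpos e).ne'])
    le_rfl
  have hβE : ∀ e, β e ∈ E e := by
    intro e
    by_contra h
    have := hβ e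
    rw [if_neg h] at this
    exact lt_irrefl _ this
  refine ⟨β, fun u w huw hw => ?_, fun w hw b => ?_⟩
  · have := hβE s(u, w)
    rw [hE u w huw hw] at this
    exact F.mem_okSet.1 this
  · have hsum : ∀ g : Sym2 V → ℝ, (∑ e, if e ∈ G.edgeSet ∧ w ∈ e then g e else 0) =
        ∑ u, if G.Adj u w then g s(u, w) else 0 := by
      intro g
      rw [← Finset.sum_filter, ← Finset.sum_filter]
      symm
      refine Finset.sum_bij (fun u _ => s(u, w)) ?_ ?_ ?_ ?_
      · intro u hu
        simpa using hu
      · intro u _ u' _ h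
        exact Sym2.congr_left.1 h
      · intro e he
        obtain ⟨h1, h2⟩ := (Finset.mem_filter.1 he).2
        obtain ⟨u, rfl⟩ := Sym2.mem_iff_exists.1 h2
        refine ⟨u, ?_, Sym2.eq_swap⟩
        simpa using (G.mem_edgeSet.1 h1).symm
      · intro u _; rfl
    have h2 := hload (w, b)
    have e1 : ∑ e, a (w, b) e (β e) =
        ((Finset.univ.filter fun u => G.Adj u w ∧ β s(u, w) = b).card : ℝ) := by
      have : ∀ e, a (w, b) e (β e) =
          if e ∈ G.edgeSet ∧ w ∈ e then (if β e = b then 1 else 0) else 0 := by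
        intro e
        simp only [a]
        by_cases h1 : e ∈ G.edgeSet <;> by_cases h2 : w ∈ e <;> simp [h1, h2, eq_comm]
      simp only [this]
      rw [hsum (fun e => if β e = b then 1 else 0), ← Finset.sum_boole]
      refine Finset.sum_congr rfl fun u _ => ?_
      by_cases h1 : G.Adj u w <;> simp [h1]
    have e2 : ∑ e, ∑ b', a (w, b) e b' * (if b' ∈ E e then ((E e).card : ℝ)⁻¹ else 0) =
        ∑ u, if G.Adj u w then F.q (s u) u w b else 0 := by
      have : ∀ e, ∑ b', a (w, b) e b' * (if b' ∈ E e then ((E e).card : ℝ)⁻¹ else 0) =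
          if e ∈ G.edgeSet ∧ w ∈ e then (if b ∈ E e then ((E e).card : ℝ)⁻¹ else 0) else 0 := by
        intro e
        simp only [a]
        rw [Finset.sum_eq_single b]
        · by_cases h1 : e ∈ G.edgeSet <;> by_cases h2 : w ∈ e <;> simp [h1, h2]
        · intro b' _ hb'
          rw [if_neg (fun h => hb' h.2.2.symm), zero_mul]
        · simp
      simp only [this]
      rw [hsum (fun e => if b ∈ E e then ((E e).card : ℝ)⁻¹ else 0)]
      refine Finset.sum_congr rfl fun u _ => ?_
      split_ifs with h1 h2
      · rw [hE u w h1 hw] at h2 ⊢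
        unfold q
        rw [if_pos (F.mem_okSet.1 h2)]
      · rw [hE u w h1 hw] at h2
        unfold q
        rw [if_neg (fun h => h2 (F.mem_okSet.2 h))]
      · rfl
    rw [e1, e2] at h2
    linarith

/-- Blocks for the edges such that all loads at vertices of high degree are bounded, and every
vertex `w` of high degree has, for each neighbour `v`, an edge in a block owned by `v`. -/
theorem exists_assignment [Fintype V] [Nonempty B] (hL : 1 ≤ L) (μ Cap pm c : ℝ) (Δ : ℕ)
    (hμ1 : 1 / (L : ℝ) ≤ μ * F.p) (hμ2 : 1 - 1 / (L : ℝ) ≤ μ * (1 - F.p))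
    (hC1 : 1 ≤ Cap * ((1 - F.p) * (1 - F.p))) (hC2 : μ ^ L ≤ Cap * (1 - F.p)) (hCap : 0 ≤ Cap)
    (hpm : 0 < pm) (hpm1 : pm ≤ F.p) (hpm2 : pm ≤ 1 - F.p) (hc1 : c ≤ 1 / L)
    (hc2 : c * Fintype.card B ≤ F.lam * pm ^ (L + 2)) (high : V → Prop)
    (hhigh : ∀ u, F.ring u → ¬ high u) (hΔ : ∀ w, {u | G.Adj u w}.ncard ≤ Δ)
    (hT : ∀ w, high w → 4 * ((L : ℝ) + 2) * Fintype.card B < c * ({u | G.Adj u w}.ncard - 1)) :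
    ∃ (s : V → V → Fin L) (β : Sym2 V → B),
      (∀ u w, G.Adj u w → high w → F.ok (s u) u w (β s(u, w))) ∧
      (∀ w, high w → ∀ b, ({u | G.Adj u w ∧ β s(u, w) = b}.ncard : ℝ) ≤
        Δ * (Cap / F.lam) + 4 * ((L : ℝ) + 2)) ∧
      ∀ w v, high w → G.Adj w v → ∃ u, G.Adj u w ∧ F.A v (β s(u, w)) := by
  classical
  obtain ⟨s, hs⟩ := F.exists_shifts hL
  obtain ⟨β, hβ, hload⟩ := F.exists_blocks s high hhigh
  have hl := F.lam_pos
  have hclose : ∀ w, high w → ∀ b, |({u | G.Adj u w ∧ β s(u, w) = b}.ncard : ℝ) -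
      ∑ u, if G.Adj u w then F.qbar u w b else 0| ≤ 4 * ((L : ℝ) + 2) := by
    intro w hw b
    have h1 := hload w hw b
    have h2 := hs w b
    rw [← Set.ncard_coe_finset, Finset.coe_filter_univ] at h1
    rw [abs_le] at h1 h2 ⊢
    constructor <;> linarith [h1.1, h1.2, h2.1, h2.2]
  refine ⟨s, β, hβ, fun w hw b => ?_, fun w v hw hwv => ?_⟩
  · have h1 := (abs_le.1 (hclose w hw b)).2
    have h2 : (∑ u, if G.Adj u w then F.qbar u w b else 0) ≤ Δ * (Cap / F.lam) := by
      calc (∑ u, if G.Adj u w then F.qbar u w b else 0)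
          ≤ ∑ u, if G.Adj u w then Cap / F.lam else 0 := by
            refine Finset.sum_le_sum fun u _ => ?_
            split_ifs with h
            · exact F.qbar_le hL μ Cap hμ1 hμ2 hC1 hC2 h b
            · exact le_rfl
        _ = {u | G.Adj u w}.ncard * (Cap / F.lam) := by
            rw [← Finset.sum_filter, Finset.sum_const, nsmul_eq_mul, ← Set.ncard_coe_finset,
              Finset.coe_filter_univ]
        _ ≤ Δ * (Cap / F.lam) := by
            gcongr
            exact hΔ w
    linarith
  · by_contra hcon
    push Not at hcon
    have hzero : ∀ b, F.A v b → {u | G.Adj u w ∧ β s(u, w) = b}.ncard = 0 := by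
      intro b hb
      rw [Set.ncard_eq_zero (Set.toFinite _), Set.eq_empty_iff_forall_notMem]
      rintro u ⟨h1, rfl⟩
      exact hcon u h1 hb
    have hup : (∑ b, if F.A v b then ∑ u, (if G.Adj u w then F.qbar u w b else 0) else 0) ≤
        4 * ((L : ℝ) + 2) * Fintype.card B := by
      calc _ ≤ ∑ _b : B, 4 * ((L : ℝ) + 2) := by
            refine Finset.sum_le_sum fun b _ => ?_
            split_ifs with hb
            · have h1 := (abs_le.1 (hclose w hw b)).1
              rw [hzero b hb] at h1
              push_cast at h1
              linarith
            · positivity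
        _ = _ := by rw [Finset.sum_const, nsmul_eq_mul, Finset.card_univ]; ring
    have hqb : ∀ u b, 0 ≤ F.qbar u w b := fun u b =>
      div_nonneg (Finset.sum_nonneg fun σ _ => F.q_nonneg σ u w b) (by positivity)
    have hlow : c * (({u | G.Adj u w}.ncard : ℝ) - 1) ≤
        ∑ b, if F.A v b then ∑ u, (if G.Adj u w then F.qbar u w b else 0) else 0 := by
      have hswap : (∑ b, if F.A v b then ∑ u, (if G.Adj u w then F.qbar u w b else 0) else 0) =
          ∑ u, if G.Adj u w then ∑ b, (if F.A v b then F.qbar u w b else 0) else 0 := by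
        have h1 : ∀ b, (if F.A v b then ∑ u, (if G.Adj u w then F.qbar u w b else 0) else 0) =
            ∑ u, if G.Adj u w then (if F.A v b then F.qbar u w b else 0) else 0 := by
          intro b
          by_cases hb : F.A v b <;> simp [hb]
        have h2 : ∀ u, (if G.Adj u w then ∑ b, (if F.A v b then F.qbar u w b else 0) else 0) =
            ∑ b, if G.Adj u w then (if F.A v b then F.qbar u w b else 0) else 0 := by
          intro u
          by_cases hu : G.Adj u w <;> simp [hu]
        simp only [h1, h2]
        exact Finset.sum_comm
      rw [hswap]
      have hcount : c * (({u | G.Adj u w}.ncard : ℝ) - 1) =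
          ∑ u, if G.Adj u w ∧ u ≠ v then c else 0 := by
        rw [← Finset.sum_filter, Finset.sum_const, nsmul_eq_mul, mul_comm]
        congr 1
        have h1 : (Finset.univ.filter fun u => G.Adj u w ∧ u ≠ v) =
            (Finset.univ.filter fun u => G.Adj u w).erase v := by
          ext u; simp [and_comm]
        have h2 : v ∈ Finset.univ.filter fun u => G.Adj u w := by simpa using hwv.symm
        rw [h1, Finset.card_erase_of_mem h2, Nat.cast_sub (Finset.card_pos.2 ⟨v, h2⟩),
          ← Set.ncard_coe_finset, Finset.coe_filter_univ, Nat.cast_one]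
      rw [hcount]
      refine Finset.sum_le_sum fun u _ => ?_
      by_cases huw : G.Adj u w
      · by_cases huv : u = v
        · rw [if_neg (fun h => h.2 huv), if_pos huw]
          refine Finset.sum_nonneg fun b _ => ?_
          split_ifs
          · exact hqb u b
          · exact le_rfl
        · rw [if_pos ⟨huw, huv⟩, if_pos huw]
          exact F.le_sum_qbar hL pm hpm hpm1 hpm2 c hc1 hc2 huw hwv huv
      · rw [if_neg (fun h => huw h.1), if_neg huw]
    linarith [hT w hw]

end Frame

/-! ### Assembling the colouring -/

/-- It suffices to break the inclusion along the edges oriented by a key refining the degree. -/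
theorem isInclusionFree_of_key {V C : Type*} [Fintype V] [Fintype C] (G : SimpleGraph V)
    (key : V → ℕ) (hkey : Function.Injective key)
    (hdeg : ∀ u v, key u < key v → {x | G.Adj u x}.ncard ≤ {x | G.Adj v x}.ncard)
    (γ : Sym2 V → C)
    (hproper : ∀ u v w, G.Adj u v → G.Adj u w → v ≠ w → γ s(u, v) ≠ γ s(u, w))
    (hfree : ∀ u v, G.Adj u v → key u < key v →
      ∃ w, G.Adj u w ∧ ∀ x, G.Adj v x → γ s(v, x) ≠ γ s(u, w)) :
    ∃ c : Sym2 V → ℕ, IsInclusionFree G c ∧ ∀ e, c e < Fintype.card C := by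
  classical
  let c : Sym2 V → ℕ := fun e => (Fintype.equivFin C (γ e)).val
  have hc : ∀ e e', c e = c e' → γ e = γ e' := fun e e' h =>
    (Fintype.equivFin C).injective (Fin.ext h)
  have hprop : IsProperEdgeColoring G c := fun u v w huv huw hvw h =>
    hproper u v w huv huw hvw (hc _ _ h)
  have hforward : ∀ u v, G.Adj u v → key u < key v → ¬ palette G c u ⊆ palette G c v := by
    intro u v huv hlt hsub
    obtain ⟨w, huw, hw⟩ := hfree u v huv hlt
    obtain ⟨x, hvx, hx⟩ := hsub ⟨w, huw, rfl⟩
    exact hw x hvx (hc _ _ hx)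
  have hpal : ∀ u, palette G c u = (fun x => c s(u, x)) '' {x | G.Adj u x} := by
    intro u
    ext n
    simp [palette]
  have hcard : ∀ u, (palette G c u).ncard = {x | G.Adj u x}.ncard := by
    intro u
    rw [hpal u]
    refine Set.InjOn.ncard_image fun x hx y hy hxy => ?_
    by_contra hne
    exact hprop u x y hx hy hne hxy
  refine ⟨c, ⟨hprop, fun u v huv hsub => ?_⟩, fun e => Fin.is_lt _⟩
  rcases lt_trichotomy (key u) (key v) with hlt | heq | hgt
  · exact hforward u v huv hlt hsub
  · exact huv.ne (hkey heq)
  · have hfin : (palette G c v).Finite := by rw [hpal v]; exact (Set.toFinite _).image _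
    have heq := Set.eq_of_subset_of_ncard_le hsub (by
      rw [hcard, hcard]; exact hdeg v u hgt) hfin
    exact hforward v u huv.symm hgt heq.ge

/-- Labels for the vertices of low degree that differ whenever two of them are at distance at most
two within the low-degree part of the graph. -/
theorem exists_low_labels {V : Type*} [Fintype V] (G : SimpleGraph V) (high : V → Prop) (T : ℕ)
    (hT : ∀ u, ¬ high u → {x | G.Adj u x}.ncard ≤ T) :
    ∃ κ : V → Fin (T + T * T + 1),
      (∀ u v, ¬ high u → ¬ high v → G.Adj u v → κ u ≠ κ v) ∧
      ∀ u x v, ¬ high u → ¬ high x → ¬ high v → G.Adj x u → G.Adj x v → u ≠ v → κ u ≠ κ v := by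
  classical
  let near : V → V → Prop := fun u v => ¬ high u ∧ ¬ high v ∧
    (G.Adj u v ∨ ∃ x, ¬ high x ∧ G.Adj x u ∧ G.Adj x v)
  obtain ⟨κ, hκ⟩ := exists_labelling (W := Fin (T + T * T + 1)) near
    (by
      rintro u v ⟨hu, hv, h | ⟨x, hx, h1, h2⟩⟩
      · exact ⟨hv, hu, Or.inl h.symm⟩
      · exact ⟨hv, hu, Or.inr ⟨x, hx, h2, h1⟩⟩)
    (fun a b => a = b) (fun _ _ => Eq.symm) (T + T * T) 1
    (by
      intro u
      by_cases hu : high u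
      · have : {v | near u v} = ∅ := by
          rw [Set.eq_empty_iff_forall_notMem]; intro v hv; exact hv.1 hu
        rw [this]; simp
      · let N : V → Finset V := fun x => Finset.univ.filter fun y => G.Adj x y
        have hN : ∀ x, ¬ high x → (N x).card ≤ T := by
          intro x hx
          rw [← Set.ncard_coe_finset, Finset.coe_filter_univ]
          exact hT x hx
        have hsub : {v | near u v} ⊆
            ↑(N u ∪ ((N u).filter fun x => ¬ high x).biUnion N) := by
          rintro v ⟨-, hv, h | ⟨x, hx, h1, h2⟩⟩
          · simp [N, h]
          · simp only [Finset.coe_union, Finset.coe_biUnion, Set.mem_union, Set.mem_iUnion]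
            refine Or.inr ⟨x, by simp [N, h1.symm, hx], by simp [N, h2]⟩
        refine (Set.ncard_le_ncard hsub (Set.toFinite _)).trans ?_
        rw [Set.ncard_coe_finset]
        refine (Finset.card_union_le _ _).trans (Nat.add_le_add (hN u hu) ?_)
        refine (Finset.card_biUnion_le_card_mul _ _ T fun x hx =>
          hN x (Finset.mem_filter.1 hx).2).trans (Nat.mul_le_mul_right _ ?_)
        exact (Finset.card_filter_le _ _).trans (hN u hu))
    (by intro w; simp)
    (by simp)
  refine ⟨κ, fun u v hu hv h => hκ u v ⟨hu, hv, Or.inl h⟩ h.ne, ?_⟩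
  intro u x v hu hx hv h1 h2 hne
  exact hκ u v ⟨hu, hv, Or.inr ⟨x, hx, h1, h2⟩⟩ hne

/-- Turning an assignment of blocks into an inclusion-free colouring: every block gets its own
palette for the edges with an end of high degree, and the remaining edges are coloured by the
unordered pair of labels of their ends, from yet another palette. -/
theorem exists_inclusionFree_of_assignment {V B : Type*} [Fintype V] [Fintype B]
    {G : SimpleGraph V} {L : ℕ} (F : Frame G B L) (key : V → ℕ) (hkey : Function.Injective key)
    (hdeg : ∀ u v, key u < key v → {x | G.Adj u x}.ncard ≤ {x | G.Adj v x}.ncard)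
    (high : V → Prop) (hhigh : ∀ u v, key u < key v → high u → high v)
    (hring : ∀ u, F.ring u ↔ ¬ high u ∧ (∀ w, G.Adj u w → ¬ high w → key u < key w) ∧
      ∀ w w', G.Adj u w → ¬ high w → G.Adj u w' → ¬ high w' → w = w')
    (T D K : ℕ) (hTD : T ≤ D) (hK : D < K * K)
    (hT : ∀ u, ¬ high u → {x | G.Adj u x}.ncard ≤ T)
    (s : V → V → Fin L) (β : Sym2 V → B)
    (hok : ∀ u w, G.Adj u w → high w → F.ok (s u) u w (β s(u, w)))
    (hload : ∀ w, high w → ∀ b, {u | G.Adj u w ∧ β s(u, w) = b}.ncard ≤ D)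
    (hown : ∀ w v, high w → G.Adj w v → ∃ u, G.Adj u w ∧ F.A v (β s(u, w))) :
    ∃ c : Sym2 V → ℕ, IsInclusionFree G c ∧ ∀ e, c e <
      Fintype.card B * (D + K) + (T + T * T + 1) * (T + T * T + 1) := by
  classical
  obtain ⟨κ, hκ1, hκ2⟩ := exists_low_labels G high T hT
  let H : B → SimpleGraph V := fun b =>
    { Adj := fun u w => G.Adj u w ∧ (high u ∨ high w) ∧ β s(u, w) = b
      symm := by
        refine ⟨fun u w h => ?_⟩
        refine ⟨h.1.symm, h.2.1.symm, ?_⟩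
        rw [Sym2.eq_swap]; exact h.2.2
      loopless := ⟨fun u h => G.loopless.irrefl u h.1⟩ }
  have hHdeg : ∀ b v, (H b).degree v ≤ D := by
    intro b v
    rw [← SimpleGraph.card_neighborFinset_eq_degree, ← Set.ncard_coe_finset]
    by_cases hv : high v
    · refine le_trans (Set.ncard_le_ncard ?_ (Set.toFinite _)) (hload v hv b)
      intro u hu
      have hu : (H b).Adj v u := by simpa using hu
      exact ⟨hu.1.symm, by rw [Sym2.eq_swap]; exact hu.2.2⟩
    · refine le_trans (Set.ncard_le_ncard ?_ (Set.toFinite _)) ((hT v hv).trans hTD)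
      intro u hu
      have hu : (H b).Adj v u := by simpa using hu
      exact hu.1
  choose cb hcb using fun b => exists_coloring_of_slack D K hK _ (H b) rfl (hHdeg b)
  have hM : 0 < D + K := by
    rcases Nat.eq_zero_or_pos K with h | h
    · rw [h] at hK; omega
    · omega
  let γ : Sym2 V → (B × Fin (D + K)) ⊕ (Sym2 (Fin (T + T * T + 1))) := fun e =>
    if ∃ x ∈ e, high x then Sum.inl (β e, ⟨cb (β e) e % (D + K), Nat.mod_lt _ hM⟩)
    else Sum.inr (e.map κ)
  have hγl : ∀ u w, (high u ∨ high w) → γ s(u, w) =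
      Sum.inl (β s(u, w), ⟨cb (β s(u, w)) s(u, w) % (D + K), Nat.mod_lt _ hM⟩) := by
    intro u w h
    refine if_pos ?_
    rcases h with h | h
    · exact ⟨u, Sym2.mem_mk_left u w, h⟩
    · exact ⟨w, Sym2.mem_mk_right u w, h⟩
  have hγr : ∀ u w, ¬ high u → ¬ high w → γ s(u, w) = Sum.inr s(κ u, κ w) := by
    intro u w hu hw
    refine (if_neg ?_).trans (by rw [Sym2.map_mk])
    rintro ⟨x, hx, hxh⟩
    rcases Sym2.mem_iff.1 hx with rfl | rfl
    · exact hu hxh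
    · exact hw hxh
  have hlr : ∀ u w x y, (high u ∨ high w) → ¬ high x → ¬ high y → γ s(u, w) ≠ γ s(x, y) := by
    intro u w x y h hx hy he
    rw [hγl u w h, hγr x y hx hy] at he
    exact absurd he (by simp)
  have hβeq : ∀ u w x y, (high u ∨ high w) → (high x ∨ high y) → γ s(u, w) = γ s(x, y) →
      β s(u, w) = β s(x, y) := by
    intro u w x y h h' he
    rw [hγl u w h, hγl x y h'] at he
    exact congrArg Prod.fst (Sum.inl.inj he)
  -- low edges at a low vertex `u` are never repeated at other neighbours of `u`
  have hlow : ∀ u v w x, G.Adj u v → G.Adj u w → v ≠ w → ¬ high u → ¬ high w → G.Adj v x →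
      γ s(v, x) ≠ γ s(u, w) := by
    intro u v w x huv huw hvw hu hw hvx he
    by_cases h : high v ∨ high x
    · exact hlr v x u w h hu hw he
    · push Not at h
      rw [hγr v x h.1 h.2, hγr u w hu hw] at he
      rcases Sym2.eq_iff.1 (Sum.inr.inj he) with ⟨h1, -⟩ | ⟨h1, -⟩
      · exact hκ1 v u h.1 hu huv.symm h1
      · exact hκ2 v u w h.1 hu hw huv huw hvw h1
  obtain ⟨c, hc, hlt⟩ := isInclusionFree_of_key G key hkey hdeg γ (by
    intro u v w huv huw hvw he
    by_cases h1 : high u ∨ high v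
    · by_cases h2 : high u ∨ high w
      · have hb := hβeq _ _ _ _ h1 h2 he
        rw [hγl u v h1, hγl u w h2] at he
        have h3 : cb (β s(u, v)) s(u, v) % (D + K) = cb (β s(u, w)) s(u, w) % (D + K) :=
          congrArg Fin.val (congrArg Prod.snd (Sum.inl.inj he))
        rw [← hb] at h3
        have hv : (H (β s(u, v))).Adj u v := ⟨huv, h1, rfl⟩
        have hw : (H (β s(u, v))).Adj u w := ⟨huw, h2, hb.symm⟩
        rw [Nat.mod_eq_of_lt ((hcb _).2 u v hv), Nat.mod_eq_of_lt ((hcb _).2 u w hw)] at h3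
        exact (hcb _).1 u v w hv hw hvw h3
      · push Not at h2
        exact hlr _ _ _ _ h1 h2.1 h2.2 he
    · push Not at h1
      by_cases h2 : high u ∨ high w
      · exact hlr _ _ _ _ h2 h1.1 h1.2 he.symm
      · push Not at h2
        rw [hγr u v h1.1 h1.2, hγr u w h2.1 h2.2] at he
        exact hκ2 v u w h1.2 h1.1 h2.2 huv huw hvw (Sym2.congr_right.1 (Sum.inr.inj he))) (by
    intro u v huv hlt
    by_cases hr : F.ring u
    · -- the edge to which the shift assigned to `v` leads
      obtain ⟨hu, hr1, hr2⟩ := (hring u).1 hr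
      set w := F.cov u v (s u v) with hw
      have huw : G.Adj u w := F.cov_adj u v _ hr huv
      have hpw : F.pred u w (s u v) = v := F.pred_cov u v _ hr huv
      have hvw : v ≠ w := by
        have := F.pred_ne u w (s u v) hr huw
        rwa [hpw] at this
      refine ⟨w, huw, fun x hvx he => ?_⟩
      by_cases hwh : high w
      · have hA : F.A v (β s(u, w)) := by
          have := ((hok u w huw hwh).2.1 hr (s u v)).2 (by rw [hpw])
          rwa [hpw] at this
        by_cases hvxh : high v ∨ high x
        · have hb := hβeq _ _ _ _ hvxh (Or.inr hwh) he
          rw [← hb] at hA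
          by_cases hv : high v
          · rw [Sym2.eq_swap] at hA
            exact (hok x v hvx.symm hv).1 hA
          · have hx : high x := hvxh.resolve_left hv
            have hvr : ¬ F.ring v := by
              intro h
              have := ((hring v).1 h).2.1 u huv.symm hu
              omega
            exact (hok v x hvx hx).2.2 hvr hA
        · push Not at hvxh
          exact hlr u w v x (Or.inr hwh) hvxh.1 hvxh.2 he.symm
      · exact hlow u v w x huv huw hvw hu hwh hvx he
    · by_cases hu : high u
      · have hv : high v := hhigh u v hlt hu
        obtain ⟨w, hwu, hA⟩ := hown u v hu huv
        refine ⟨w, hwu.symm, fun x hvx he => ?_⟩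
        have hb := hβeq _ _ _ _ (Or.inl hv) (Or.inl hu) he
        rw [Sym2.eq_swap, ← hb, Sym2.eq_swap] at hA
        exact (hok x v hvx.symm hv).1 hA
      · obtain ⟨w, huw, hw, hvw⟩ : ∃ w, G.Adj u w ∧ ¬ high w ∧ v ≠ w := by
          by_contra hcon
          push Not at hcon
          have hall : ∀ w, G.Adj u w → ¬ high w → v = w := by
            intro w h1 h2
            by_contra h3
            exact h3 (hcon w h1 h2)
          refine hr ((hring u).2 ⟨hu, fun w h1 h2 => ?_, fun w w' h1 h2 h3 h4 => ?_⟩)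
          · rw [← hall w h1 h2]; exact hlt
          · rw [← hall w h1 h2, ← hall w' h3 h4]
        exact ⟨w, huw, fun x hvx => hlow u v w x huv huw hvw hu hw hvx⟩)
  refine ⟨c, hc, fun e => (hlt e).trans_le ?_⟩
  rw [Fintype.card_sum, Fintype.card_prod, Fintype.card_fin]
  refine Nat.add_le_add_left ?_ _
  have := Fintype.card_le_of_surjective
    (fun z : Fin (T + T * T + 1) × Fin (T + T * T + 1) => s(z.1, z.2))
    (fun e => by induction e using Sym2.ind with | _ x y => exact ⟨(x, y), rfl⟩)
  rwa [Fintype.card_prod, Fintype.card_fin] at this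

/-! ### Construction of frames -/

/-- Few words agree with a given word in more than `t` coordinates. -/
theorem ncard_words_agree_le {n ρ t : ℕ} (hρ : 0 < ρ) (htn : t + 1 ≤ n) (w : Fin n → Fin ρ) :
    {w' : Fin n → Fin ρ | t < (Finset.univ.filter fun x => w x = w' x).card}.ncard ≤
      2 ^ n * ρ ^ (n - (t + 1)) := by
  classical
  have : Nonempty (Fin ρ) := ⟨⟨0, hρ⟩⟩
  have hρr : (ρ : ℝ) ≠ 0 := by exact_mod_cast hρ.ne'
  let U : Finset (Fin n) → Finset (Fin n → Fin ρ) := fun X =>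
    Finset.univ.filter fun w' => ∀ x ∈ X, w' x ∈ ({w x} : Finset (Fin ρ))
  have hU : ∀ X ∈ Finset.powersetCard (t + 1) (Finset.univ : Finset (Fin n)),
      (U X).card ≤ ρ ^ (n - (t + 1)) := by
    intro X hX
    have hX' := (Finset.mem_powersetCard.1 hX).2
    have h1 := card_fun_constrained X (fun x => x) (fun _ _ _ _ h => h)
      (fun x => ({w x} : Finset (Fin ρ)))
    simp only [Finset.card_singleton, Fintype.card_fin, Finset.prod_const, hX', Nat.cast_one] at h1
    have h2 : ((U X).card : ℝ) = ((ρ ^ (n - (t + 1)) : ℕ) : ℝ) := by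
      rw [← Set.ncard_coe_finset, Finset.coe_filter_univ, h1, Nat.cast_pow, pow_sub₀ _ hρr htn,
        one_div, inv_pow]
    exact (Nat.cast_injective h2).le
  have hsub : {w' : Fin n → Fin ρ | t < (Finset.univ.filter fun x => w x = w' x).card} ⊆
      ↑((Finset.powersetCard (t + 1) (Finset.univ : Finset (Fin n))).biUnion U) := by
    intro w' hw'
    obtain ⟨X, hX, hXc⟩ := Finset.exists_subset_card_eq (Nat.succ_le_of_lt hw')
    refine Finset.mem_coe.2 (Finset.mem_biUnion.2
      ⟨X, Finset.mem_powersetCard.2 ⟨Finset.subset_univ _, hXc⟩, ?_⟩)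
    refine Finset.mem_filter.2 ⟨Finset.mem_univ _, fun x hx => Finset.mem_singleton.2 ?_⟩
    exact ((Finset.mem_filter.1 (hX hx)).2).symm
  refine (Set.ncard_le_ncard hsub (Set.toFinite _)).trans ?_
  rw [Set.ncard_coe_finset]
  refine (Finset.card_biUnion_le_card_mul _ _ _ hU).trans (Nat.mul_le_mul_right _ ?_)
  rw [Finset.card_powersetCard, Finset.card_univ, Fintype.card_fin]
  exact Nat.choose_le_two_pow n (t + 1)

theorem ncard_near_le {V : Type*} [Fintype V] (G : SimpleGraph V) (Δ : ℕ)
    (hΔ : ∀ v, {x | G.Adj v x}.ncard ≤ Δ) (v : V) :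
    {u | Near G v u}.ncard ≤ (Δ + 1) * ((Δ + 1) * (Δ + 1)) := by
  classical
  let N : V → Finset V := fun x => insert x (Finset.univ.filter fun y => G.Adj x y)
  have hN : ∀ x, (N x).card ≤ Δ + 1 := by
    intro x
    refine (Finset.card_insert_le _ _).trans (Nat.succ_le_succ ?_)
    rw [← Set.ncard_coe_finset, Finset.coe_filter_univ]
    exact hΔ x
  have hmem : ∀ x y, (x = y ∨ G.Adj x y) → y ∈ N x := by
    rintro x y (rfl | h)
    · exact Finset.mem_insert_self _ _
    · exact Finset.mem_insert_of_mem (by simpa using h)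
  have hsub : {u | Near G v u} ⊆ ↑((N v).biUnion fun a => (N a).biUnion N) := by
    rintro u ⟨a, b, h1, h2, h3⟩
    exact Finset.mem_coe.2 (Finset.mem_biUnion.2 ⟨a, hmem _ _ h1,
      Finset.mem_biUnion.2 ⟨b, hmem _ _ h2, hmem _ _ h3⟩⟩)
  refine (Set.ncard_le_ncard hsub (Set.toFinite _)).trans ?_
  rw [Set.ncard_coe_finset]
  refine (Finset.card_biUnion_le_card_mul _ _ _ fun a _ => ?_).trans
    (Nat.mul_le_mul_right _ (hN v))
  exact (Finset.card_biUnion_le_card_mul _ _ _ fun b _ => hN b).trans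
    (Nat.mul_le_mul_right _ (hN a))

theorem Near.symm {V : Type*} {G : SimpleGraph V} {u v : V} (h : Near G u v) : Near G v u := by
  obtain ⟨a, b, h1, h2, h3⟩ := h
  exact ⟨b, a, h3.imp Eq.symm SimpleGraph.Adj.symm, h2.imp Eq.symm SimpleGraph.Adj.symm,
    h1.imp Eq.symm SimpleGraph.Adj.symm⟩

/-- Frames with any prescribed set of ring vertices exist. The blocks are the pairs of a coordinate
`x` and a function `h : Fin ρ → Fin Z`; a vertex with word `f v` owns the block when
`h (f v x) < P`. -/
theorem exists_frame {V : Type*} [Fintype V] (G : SimpleGraph V) (L P Z Δ n t ρ : ℕ)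
    (hP : 0 < P) (hPZ : P < Z) (hρ : 0 < ρ) (hlow : ∀ v, L + 1 ≤ {x | G.Adj v x}.ncard)
    (hΔ : ∀ v, {x | G.Adj v x}.ncard ≤ Δ) (htn : t + 1 ≤ n)
    (hlam : (L + 2) * (L + 2) * t < n)
    (hwords : (Δ + 1) * ((Δ + 1) * (Δ + 1)) * 2 ^ n < ρ ^ (t + 1)) (ring : V → Prop) :
    ∃ F : Frame G (Fin n × (Fin ρ → Fin Z)) L, F.ring = ring ∧ F.p = (P : ℝ) / Z ∧
      F.lam = ((n : ℝ) - (L + 2) * (L + 2) * t) * (Z : ℝ) ^ ρ := by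
  classical
  obtain ⟨f, hf⟩ := exists_labelling (Near G) (fun _ _ => Near.symm)
    (fun w w' : Fin n → Fin ρ => t < (Finset.univ.filter fun x => w x = w' x).card)
    (fun w w' h => by simpa only [eq_comm] using h) _ _ (ncard_near_le G Δ hΔ)
    (ncard_words_agree_le hρ htn) (by
      rw [Fintype.card_fun, Fintype.card_fin, Fintype.card_fin, ← mul_assoc]
      calc _ < ρ ^ (t + 1) * ρ ^ (n - (t + 1)) :=
            Nat.mul_lt_mul_of_pos_right hwords (pow_pos hρ _)
        _ = ρ ^ n := by rw [← pow_add]; congr 1; omega)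
  have hZ : 0 < Z := by omega
  have hZr : (0 : ℝ) < Z := by exact_mod_cast hZ
  have hPr : (0 : ℝ) < P := by exact_mod_cast hP
  have hPZr : (P : ℝ) < Z := by exact_mod_cast hPZ
  let N : V → Finset V := fun x => Finset.univ.filter fun y => G.Adj x y
  have hNm : ∀ x y, y ∈ N x ↔ G.Adj x y := fun x y => by simp [N]
  have hN : ∀ x, (N x).card = {y | G.Adj x y}.ncard := by
    intro x
    rw [← Set.ncard_coe_finset, Finset.coe_filter_univ]
  choose cov pred part hpart hring hinj hsize using fun u =>
    exists_ring L (N u) (by rw [hN]; exact hlow u)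
  refine ⟨{
    A := fun v b => (b.2 (f v b.1)).val < P
    ring := ring
    cov := cov
    pred := pred
    part := part
    cov_adj := fun u v r _ h => (hNm _ _).1 (hring u v ((hNm _ _).2 h) r).1
    pred_adj := fun u v r _ h => (hNm _ _).1 (hring u v ((hNm _ _).2 h) r).2.1
    pred_cov := fun u v r _ h => (hring u v ((hNm _ _).2 h) r).2.2.1
    pred_ne := fun u v r _ h => (hring u v ((hNm _ _).2 h) r).2.2.2.1
    part_pred := fun u v r _ h => (hring u v ((hNm _ _).2 h) r).2.2.2.2
    pred_inj := fun u v _ h => hinj u v ((hNm _ _).2 h)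
    card_part := fun u k => ?_
    p := (P : ℝ) / Z
    lam := ((n : ℝ) - (L + 2) * (L + 2) * t) * (Z : ℝ) ^ ρ
    p_pos := by positivity
    p_lt := by rw [div_lt_one hZr]; exact hPZr
    lam_pos := ?_
    pattern := fun S Q hS hnear => ?_ }, rfl, rfl, rfl⟩
  · refine le_trans (le_of_eq ?_) (hsize u k)
    rw [← Set.ncard_coe_finset]
    congr 1
    ext v
    simp [N]
  · have : (((L + 2) * (L + 2) * t : ℕ) : ℝ) < n := by exact_mod_cast hlam
    push_cast at this
    have h2 : (0 : ℝ) < n - (L + 2) * (L + 2) * t := by linarith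
    positivity
  · have h1 := card_pattern_ge hZ P hPZ.le f S t (L + 2) hS
      (fun u hu v hv huv => not_lt.1 (hf u v (hnear u hu v hv huv) huv)) Q
    rw [← Set.ncard_coe_finset, Finset.coe_filter_univ] at h1
    push_cast at h1
    exact h1

/-! ### Choice of parameters -/

/-- The colouring with all parameters explicit: `ℓ` is about `log₂ Δ`, there are `h * ℓ * Z ^ ρ`
blocks with `ρ = 2 ^ (h + 3)`, and degrees above `T` count as high. -/
theorem exists_coloring_of_params {V : Type*} [Fintype V] (G : SimpleGraph V)
    (L P Z Δ h ℓ T : ℕ) (hL : 1 ≤ L) (hP : 0 < P) (hPZ : P < Z) (μ Cap pm c : ℝ)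
    (hμ1 : 1 / (L : ℝ) ≤ μ * (P / Z)) (hμ2 : 1 - 1 / (L : ℝ) ≤ μ * (1 - P / Z))
    (hC1 : 1 ≤ Cap * ((1 - (P : ℝ) / Z) * (1 - (P : ℝ) / Z)))
    (hC2 : μ ^ L ≤ Cap * (1 - (P : ℝ) / Z)) (hCap : 0 ≤ Cap)
    (hpm : 0 < pm) (hpm1 : pm ≤ (P : ℝ) / Z) (hpm2 : pm ≤ 1 - (P : ℝ) / Z)
    (hc0 : 0 ≤ c) (hc1 : c ≤ 1 / L)
    (hc2 : c * h ≤ ((h : ℝ) - (L + 2) * (L + 2)) * pm ^ (L + 2))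
    (hh : (L + 2) * (L + 2) < h) (hℓ : 1 ≤ ℓ) (hΔℓ : Δ + 1 ≤ 2 ^ ℓ)
    (hT : 4 * ((L : ℝ) + 2) * (h * ℓ * (Z : ℝ) ^ (2 ^ (h + 3))) < c * T)
    (hlow : ∀ v, L + 1 ≤ {x | G.Adj v x}.ncard) (hΔ : ∀ v, {x | G.Adj v x}.ncard ≤ Δ) (D : ℕ)
    (hD : D = ⌊Δ * (Cap / (((h : ℝ) - (L + 2) * (L + 2)) * ℓ * (Z : ℝ) ^ (2 ^ (h + 3))))⌋₊ +
      4 * (L + 2) + T) :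
    ∃ col : Sym2 V → ℕ, IsInclusionFree G col ∧ ∀ e, col e <
      (h * ℓ * Z ^ (2 ^ (h + 3))) * (D + (Nat.sqrt D + 1)) + (T + T * T + 1) * (T + T * T + 1) := by
  classical
  let high : V → Prop := fun v => T < {x | G.Adj v x}.ncard
  let key : V → ℕ := fun v =>
    {x | G.Adj v x}.ncard * Fintype.card V + (Fintype.equivFin V v).val
  have hkeylt : ∀ u v, {x | G.Adj u x}.ncard < {x | G.Adj v x}.ncard → key u < key v := by
    intro u v hlt
    have h1 := (Fintype.equivFin V u).is_lt
    have h2 := Nat.mul_le_mul_right (Fintype.card V) (Nat.succ_le_of_lt hlt)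
    rw [Nat.succ_mul] at h2
    simp only [key]
    omega
  have hdeg : ∀ u v, key u < key v → {x | G.Adj u x}.ncard ≤ {x | G.Adj v x}.ncard := by
    intro u v huv
    by_contra hcon
    have := hkeylt v u (not_le.1 hcon)
    omega
  have hkey : Function.Injective key := by
    intro u v huv
    rcases lt_trichotomy {x | G.Adj u x}.ncard {x | G.Adj v x}.ncard with h1 | h1 | h1
    · have := hkeylt u v h1; omega
    · simp only [key, h1] at huv
      exact (Fintype.equivFin V).injective (Fin.ext (Nat.add_left_cancel huv))
    · have := hkeylt v u h1; omega
  have hZ : 0 < Z := by omega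
  have hZr : (0 : ℝ) < Z := by exact_mod_cast hZ
  have hℓr : (0 : ℝ) < ℓ := by exact_mod_cast hℓ
  have hhr : (0 : ℝ) < (h : ℝ) - (L + 2) * (L + 2) := by
    have : (((L + 2) * (L + 2) : ℕ) : ℝ) < h := by exact_mod_cast hh
    push_cast at this
    linarith
  have h4 : 4 ≤ (L + 2) * (L + 2) := by nlinarith
  obtain ⟨F, hFr, hFp, hFl⟩ := exists_frame G L P Z Δ (h * ℓ) ℓ (2 ^ (h + 3)) hP hPZ (by positivity)
    hlow hΔ (by nlinarith) (by nlinarith) (by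
      calc (Δ + 1) * ((Δ + 1) * (Δ + 1)) * 2 ^ (h * ℓ)
          ≤ 2 ^ ℓ * (2 ^ ℓ * 2 ^ ℓ) * 2 ^ (h * ℓ) := by gcongr
        _ = 2 ^ ((h + 3) * ℓ) := by rw [← pow_add, ← pow_add, ← pow_add]; congr 1; ring
        _ < 2 ^ ((h + 3) * (ℓ + 1)) := by
            refine Nat.pow_lt_pow_right (by norm_num) ?_
            nlinarith
        _ = (2 ^ (h + 3)) ^ (ℓ + 1) := by rw [pow_mul])
    (fun u => ¬ high u ∧ (∀ w, G.Adj u w → ¬ high w → key u < key w) ∧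
      ∀ w w', G.Adj u w → ¬ high w → G.Adj u w' → ¬ high w' → w = w')
  have hlam : F.lam = ((h : ℝ) - (L + 2) * (L + 2)) * ℓ * (Z : ℝ) ^ (2 ^ (h + 3)) := by
    rw [hFl]; push_cast; ring
  have hcard : Fintype.card (Fin (h * ℓ) × (Fin (2 ^ (h + 3)) → Fin Z)) =
      h * ℓ * Z ^ (2 ^ (h + 3)) := by
    rw [Fintype.card_prod, Fintype.card_fun, Fintype.card_fin, Fintype.card_fin, Fintype.card_fin]
  have hcardr : (Fintype.card (Fin (h * ℓ) × (Fin (2 ^ (h + 3)) → Fin Z)) : ℝ) =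
      h * ℓ * (Z : ℝ) ^ (2 ^ (h + 3)) := by
    rw [hcard]; push_cast; rfl
  have hne : Nonempty (Fin (h * ℓ) × (Fin (2 ^ (h + 3)) → Fin Z)) := by
    rw [← Fintype.card_pos_iff, hcard]
    have : 0 < h := by omega
    positivity
  have hcomm : ∀ w, {u | G.Adj u w} = {u | G.Adj w u} := fun w => by
    ext u; exact G.adj_comm u w
  obtain ⟨s, β, hok, hload, hown⟩ := F.exists_assignment hL μ Cap pm c Δ (by rwa [hFp])
    (by rwa [hFp]) (by rwa [hFp]) (by rwa [hFp]) hCap hpm (by rwa [hFp]) (by rwa [hFp]) hc1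
    (by
      rw [hcardr, hlam]
      have : (0 : ℝ) ≤ ℓ * (Z : ℝ) ^ (2 ^ (h + 3)) := by positivity
      nlinarith [mul_le_mul_of_nonneg_right hc2 this])
    high (fun u hu => by rw [hFr] at hu; exact hu.1) (fun w => by rw [hcomm]; exact hΔ w)
    (fun w hw => by
      rw [hcardr, hcomm]
      refine hT.trans_le (mul_le_mul_of_nonneg_left ?_ hc0)
      have : ((T + 1 : ℕ) : ℝ) ≤ {u | G.Adj w u}.ncard := by exact_mod_cast hw
      push_cast at this
      linarith)
  obtain ⟨col, hcol, hlt⟩ := exists_inclusionFree_of_assignment F key hkey hdeg high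
    (fun u v huv hu => lt_of_lt_of_le hu (hdeg u v huv)) (fun u => by rw [hFr])
    T D (Nat.sqrt D + 1) (by omega) (Nat.lt_succ_sqrt D) (fun u hu => not_lt.1 hu) s β hok
    (fun w hw b => by
      have h1 := hload w hw b
      rw [hlam] at h1
      have h2 := Nat.le_floor h1
      have h3 : (4 * ((L : ℝ) + 2)) = ((4 * (L + 2) : ℕ) : ℝ) := by push_cast; ring
      rw [h3, Nat.floor_add_natCast (by positivity)] at h2
      omega) hown
  exact ⟨col, hcol, fun e => by rw [← hcard]; exact hlt e⟩

theorem exists_log_pow_le (C g : ℝ) (hg : 0 < g) : ∃ Δ₀ : ℕ, ∀ Δ : ℕ, Δ₀ ≤ Δ →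
    C * ((Nat.log 2 Δ + 1 : ℕ) : ℝ) ^ 4 ≤ g * Δ := by
  have h1 := tendsto_pow_const_div_const_pow_of_one_lt 4 (r := (2 : ℝ)) (by norm_num)
  have h2 := h1.const_mul (2 * |C|)
  rw [mul_zero] at h2
  have h3 := h2.eventually (gt_mem_nhds hg)
  obtain ⟨ℓ₀, hℓ₀⟩ := Filter.eventually_atTop.1 h3
  refine ⟨2 ^ ℓ₀, fun Δ hΔ => ?_⟩
  have hΔ0 : Δ ≠ 0 := by
    have : 0 < 2 ^ ℓ₀ := by positivity
    omega
  have hlog : ℓ₀ ≤ Nat.log 2 Δ := Nat.le_log_of_pow_le (by norm_num) hΔ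
  have h4 := hℓ₀ (Nat.log 2 Δ + 1) (by omega)
  have h5 : ((2 ^ Nat.log 2 Δ : ℕ) : ℝ) ≤ Δ := by exact_mod_cast Nat.pow_log_le_self 2 hΔ0
  push_cast at h5
  set x : ℝ := ((Nat.log 2 Δ + 1 : ℕ) : ℝ) ^ 4 with hx
  have hx0 : 0 ≤ x := by positivity
  have hpos : (0 : ℝ) < 2 ^ Nat.log 2 Δ := by positivity
  have h6 : 2 * |C| * (x / 2 ^ (Nat.log 2 Δ + 1)) = |C| * x / 2 ^ Nat.log 2 Δ := by
    rw [pow_succ]; field_simp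
  rw [h6, div_lt_iff₀ hpos] at h4
  calc C * x ≤ |C| * x := mul_le_mul_of_nonneg_right (le_abs_self C) hx0
    _ ≤ g * 2 ^ Nat.log 2 Δ := h4.le
    _ ≤ g * Δ := mul_le_mul_of_nonneg_left h5 hg.le

/-- The final count: the block colours cost `X' Δ` up to a factor `1 + η`, and everything else is
of order `ℓ ^ 4`, which is absorbed in the gap between `(1 + η) X'` and `X`. -/
theorem colour_count_le {h ℓ W D Δ Cap N X' X η a T sq : ℝ} (hh : 0 < h) (hℓ : 1 ≤ ℓ) (hW : 0 < W)
    (hNh : 0 < h - N) (hcap : Cap * h ≤ X' * (h - N)) (hη : 0 < η)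
    (hηX : (1 + η) * X' = X - (X - X') / 2) (ha : 0 ≤ a) (hT : 0 ≤ T) (hΔ : 0 ≤ Δ)
    (hDle : D ≤ Δ * (Cap / ((h - N) * ℓ * W)) + a + T * ℓ)
    (hsq : sq ≤ η * D + 1 / (4 * η))
    (hpoly : ((1 + η) * (h * W) * (a + T) + h * W * (1 / (4 * η) + 1) +
      (T + T * T + 1) * (T + T * T + 1)) * ℓ ^ 4 ≤ (X - X') / 2 * Δ) :
    (h * ℓ * W) * (D + (sq + 1)) +
      (T * ℓ + T * ℓ * (T * ℓ) + 1) * (T * ℓ + T * ℓ * (T * ℓ) + 1) ≤ X * Δ := by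
  have hℓ0 : 0 < ℓ := by linarith
  have hlsq : ℓ ≤ ℓ ^ 2 := le_self_pow₀ hℓ (by norm_num)
  have hl1 : ℓ ≤ ℓ ^ 4 := le_self_pow₀ hℓ (by norm_num)
  have hl2 : ℓ ^ 2 ≤ ℓ ^ 4 := pow_le_pow_right₀ hℓ (by norm_num)
  have hmD : (h * ℓ * W) * D ≤ X' * Δ + h * W * (a + T) * ℓ ^ 2 := by
    calc (h * ℓ * W) * D ≤ (h * ℓ * W) * (Δ * (Cap / ((h - N) * ℓ * W)) + a + T * ℓ) := by
          gcongr
      _ = Cap * h / (h - N) * Δ + h * W * (a * ℓ + T * ℓ ^ 2) := by field_simp; ring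
      _ ≤ X' * Δ + h * W * (a * ℓ ^ 2 + T * ℓ ^ 2) := by
          gcongr
          rw [div_le_iff₀ hNh]; exact hcap
      _ = _ := by ring
  have hT2 : T * ℓ + T * ℓ * (T * ℓ) + 1 ≤ (T + T * T + 1) * ℓ ^ 2 := by
    have h1 : T * ℓ ≤ T * ℓ ^ 2 := by gcongr
    have h2 : 1 ≤ ℓ ^ 2 := one_le_pow₀ hℓ
    linarith
  have hT4 : (T * ℓ + T * ℓ * (T * ℓ) + 1) * (T * ℓ + T * ℓ * (T * ℓ) + 1) ≤
      (T + T * T + 1) * (T + T * T + 1) * ℓ ^ 4 := by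
    calc _ ≤ ((T + T * T + 1) * ℓ ^ 2) * ((T + T * T + 1) * ℓ ^ 2) := by gcongr
      _ = _ := by ring
  calc (h * ℓ * W) * (D + (sq + 1)) +
        (T * ℓ + T * ℓ * (T * ℓ) + 1) * (T * ℓ + T * ℓ * (T * ℓ) + 1)
      ≤ (h * ℓ * W) * (D + (η * D + 1 / (4 * η) + 1)) +
        (T + T * T + 1) * (T + T * T + 1) * ℓ ^ 4 := by gcongr
    _ = (1 + η) * ((h * ℓ * W) * D) + h * W * (1 / (4 * η) + 1) * ℓ +
        (T + T * T + 1) * (T + T * T + 1) * ℓ ^ 4 := by ring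
    _ ≤ (1 + η) * (X' * Δ + h * W * (a + T) * ℓ ^ 4) + h * W * (1 / (4 * η) + 1) * ℓ ^ 4 +
        (T + T * T + 1) * (T + T * T + 1) * ℓ ^ 4 := by
        gcongr
        refine hmD.trans ?_
        gcongr
    _ = (1 + η) * X' * Δ + ((1 + η) * (h * W) * (a + T) + h * W * (1 / (4 * η) + 1) +
        (T + T * T + 1) * (T + T * T + 1)) * ℓ ^ 4 := by ring
    _ ≤ (1 + η) * X' * Δ + (X - X') / 2 * Δ := by gcongr
    _ = X * Δ := by rw [hηX]; ring

/-- With the parameters fixed and `Δ` large, `X Δ` colours suffice for every `X` above the constant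
`Cap` forced by the densities `P / Z` (of the owned blocks) and `1 / L`. -/
theorem exists_coloring_asymptotic (L P Z : ℕ) (hL : 1 ≤ L) (hP : 0 < P) (hPZ : P < Z)
    (μ Cap X : ℝ)
    (hμ1 : 1 / (L : ℝ) ≤ μ * (P / Z)) (hμ2 : 1 - 1 / (L : ℝ) ≤ μ * (1 - P / Z))
    (hC1 : 1 ≤ Cap * ((1 - (P : ℝ) / Z) * (1 - (P : ℝ) / Z)))
    (hC2 : μ ^ L ≤ Cap * (1 - (P : ℝ) / Z)) (hX : Cap < X) :
    ∃ Δ₀ : ℕ, ∀ (V : Type) [Fintype V] (G : SimpleGraph V) (Δ : ℕ),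
      (∀ v, L + 1 ≤ {x | G.Adj v x}.ncard) → (∀ v, {x | G.Adj v x}.ncard ≤ Δ) → Δ₀ ≤ Δ →
      ∃ (col : Sym2 V → ℕ) (k : ℕ), IsInclusionFree G col ∧ (∀ e, col e < k) ∧ (k : ℝ) ≤ X * Δ := by
  have hZr : (0 : ℝ) < Z := by exact_mod_cast hP.trans hPZ
  have hPr : (0 : ℝ) < P := by exact_mod_cast hP
  have hp0 : 0 < (P : ℝ) / Z := by positivity
  have hp1 : 0 < 1 - (P : ℝ) / Z := by
    rw [sub_pos, div_lt_one hZr]; exact_mod_cast hPZ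
  have hLr : (0 : ℝ) < L := by exact_mod_cast hL
  have hCap : 0 < Cap := by
    by_contra hcon
    have : Cap * ((1 - (P : ℝ) / Z) * (1 - (P : ℝ) / Z)) ≤ 0 :=
      mul_nonpos_of_nonpos_of_nonneg (not_lt.1 hcon) (by positivity)
    linarith
  -- half of the gap between `Cap` and `X` absorbs the defect of the blocks, a quarter the slack of
  -- the colourings inside the blocks, and the rest all terms polylogarithmic in `Δ`
  set X' : ℝ := (Cap + X) / 2 with hX'
  set N : ℝ := ((L : ℝ) + 2) * (L + 2) with hN
  have hN0 : 0 < N := by positivity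
  obtain ⟨h, hh⟩ := exists_nat_gt (X' * N / (X' - Cap) + N)
  have hXC : 0 < X' - Cap := by rw [hX']; linarith
  have hX'0 : 0 < X' := by linarith
  have hhN : N < h := by
    have : 0 ≤ X' * N / (X' - Cap) := by positivity
    linarith
  have hhN' : (L + 2) * (L + 2) < h := by
    have : (((L + 2) * (L + 2) : ℕ) : ℝ) < h := by push_cast; exact hhN
    exact_mod_cast this
  have hcap1 : Cap * h ≤ X' * (h - N) := by
    have h1 : X' * N / (X' - Cap) < h := by linarith
    rw [div_lt_iff₀ hXC] at h1
    nlinarith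
  have hhpos : (0 : ℝ) < h := by linarith
  set η : ℝ := (X - X') / (2 * X') with hη
  have hXX' : 0 < X - X' := by rw [hX']; linarith
  have hη0 : 0 < η := by positivity
  set pm : ℝ := min ((P : ℝ) / Z) (1 - (P : ℝ) / Z) with hpm
  have hpm0 : 0 < pm := lt_min hp0 hp1
  set c : ℝ := min (1 / (L : ℝ)) (((h : ℝ) - N) * pm ^ (L + 2) / h) with hc
  have hc0 : 0 < c := by
    refine lt_min (by positivity) ?_
    have : 0 < (h : ℝ) - N := by linarith
    positivity
  set W : ℝ := (Z : ℝ) ^ (2 ^ (h + 3)) with hW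
  have hW0 : 0 < W := by positivity
  set a : ℝ := 4 * ((L : ℝ) + 2) with ha
  obtain ⟨T₀, hT₀⟩ := exists_nat_gt (a * (h * W) / c)
  rw [div_lt_iff₀ hc0] at hT₀
  obtain ⟨Δ₀, hΔ₀⟩ := exists_log_pow_le ((1 + η) * (h * W) * (a + T₀) +
    h * W * (1 / (4 * η) + 1) + (T₀ + T₀ * T₀ + 1) * (T₀ + T₀ * T₀ + 1)) ((X - X') / 2)
    (by linarith)
  refine ⟨Δ₀, fun V _ G Δ hlow hΔ hΔΔ₀ => ?_⟩
  have hpoly := hΔ₀ Δ hΔΔ₀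
  set ℓ := Nat.log 2 Δ + 1 with hℓ
  have hℓ1 : 1 ≤ ℓ := by omega
  have hℓr : (1 : ℝ) ≤ ℓ := by exact_mod_cast hℓ1
  set D := ⌊Δ * (Cap / (((h : ℝ) - (L + 2) * (L + 2)) * ℓ * (Z : ℝ) ^ (2 ^ (h + 3))))⌋₊ +
      4 * (L + 2) + T₀ * ℓ with hD
  obtain ⟨col, hcol, hlt⟩ := exists_coloring_of_params G L P Z Δ h ℓ (T₀ * ℓ) hL hP hPZ μ Cap pm c
    hμ1 hμ2 hC1 hC2 hCap.le hpm0 (min_le_left _ _) (min_le_right _ _) hc0.le (min_le_left _ _)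
    (by
      have : c ≤ ((h : ℝ) - N) * pm ^ (L + 2) / h := min_le_right _ _
      rwa [le_div_iff₀ hhpos] at this)
    hhN' hℓ1 (Nat.succ_le_of_lt (Nat.lt_pow_succ_log_self (by norm_num) Δ))
    (by
      push_cast
      have := mul_lt_mul_of_pos_right hT₀ (by linarith : (0 : ℝ) < ℓ)
      nlinarith)
    hlow hΔ D hD
  refine ⟨col, _, hcol, hlt, ?_⟩
  push_cast
  rw [← hW]
  have hNh : 0 < (h : ℝ) - N := by linarith
  have hDle : (D : ℝ) ≤ Δ * (Cap / ((h - N) * ℓ * W)) + a + T₀ * ℓ := by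
    rw [hD]
    push_cast
    have := Nat.floor_le (show 0 ≤ (Δ : ℝ) * (Cap / (((h : ℝ) - N) * ℓ * W)) by positivity)
    rw [ha]
    linarith
  have hsqrt : (Nat.sqrt D : ℝ) ≤ η * D + 1 / (4 * η) := by
    have h1 : ((Nat.sqrt D * Nat.sqrt D : ℕ) : ℝ) ≤ D := by exact_mod_cast Nat.sqrt_le D
    push_cast at h1
    have h2 : η * (Nat.sqrt D * Nat.sqrt D) ≤ η * D := mul_le_mul_of_nonneg_left h1 hη0.le
    have h3 : η * (Nat.sqrt D * Nat.sqrt D) + 1 / (4 * η) - Nat.sqrt D =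
        (2 * η * Nat.sqrt D - 1) ^ 2 / (4 * η) := by
      field_simp; ring
    have h4 : 0 ≤ (2 * η * Nat.sqrt D - 1) ^ 2 / (4 * η) := by positivity
    linarith
  have hηX : (1 + η) * X' = X - (X - X') / 2 := by
    rw [hη]; field_simp; ring
  exact colour_count_le hhpos hℓr hW0 hNh hcap1 hη0 hηX (by positivity) (Nat.cast_nonneg _)
    (Nat.cast_nonneg _) hDle hsqrt hpoly

theorem corollary_large_Delta (δ : ℕ) (h2 : 2 ≤ δ) :
    ∃ Δ₀ : ℕ, ∀ (V : Type) [Fintype V] (G : SimpleGraph V) [DecidableRel G.Adj] (Δ : ℕ),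
      G.minDegree = δ → G.maxDegree = Δ → Δ₀ ≤ Δ →
      (inclusionChromaticIndex G : ℝ) ≤ (1 + 4 / ((δ : ℝ) - 1)) * Δ := by
  obtain ⟨L, rfl⟩ : ∃ L, δ = L + 1 := ⟨δ - 1, by omega⟩
  have hL : 1 ≤ L := by omega
  have key : ∃ Δ₀ : ℕ, ∀ (V : Type) [Fintype V] (G : SimpleGraph V) (Δ : ℕ),
      (∀ v, L + 1 ≤ {x | G.Adj v x}.ncard) → (∀ v, {x | G.Adj v x}.ncard ≤ Δ) → Δ₀ ≤ Δ →
      ∃ (col : Sym2 V → ℕ) (k : ℕ), IsInclusionFree G col ∧ (∀ e, col e < k) ∧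
        (k : ℝ) ≤ (1 + 4 / (L : ℝ)) * Δ := by
    -- the densities `1 / 2`, `2 / 5` and `1 / L`; the last one makes `μ = 1`, but gives too large a
    -- constant for `L ≤ 2`
    obtain rfl | rfl | hL3 : L = 1 ∨ L = 2 ∨ 3 ≤ L := by omega
    · exact exists_coloring_asymptotic 1 1 2 le_rfl (by norm_num) (by norm_num) 2 4 _
        (by norm_num) (by norm_num) (by norm_num) (by norm_num) (by norm_num)
    · exact exists_coloring_asymptotic 2 2 5 (by norm_num) (by norm_num) (by norm_num)
        (5 / 4) (25 / 9) _
        (by norm_num) (by norm_num) (by norm_num) (by norm_num) (by norm_num)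
    · have hLr : (3 : ℝ) ≤ L := by exact_mod_cast hL3
      have hL0 : (L : ℝ) ≠ 0 := by positivity
      have hL1 : (0 : ℝ) < L - 1 := by linarith
      have hp : 1 - ((1 : ℕ) : ℝ) / L = (L - 1) / L := by push_cast; field_simp
      refine exists_coloring_asymptotic L 1 L hL one_pos (by omega) 1 ((L / (L - 1)) ^ 2) _
        (by simp) (by simp) ?_ ?_ ?_
      · rw [hp]
        apply le_of_eq
        field_simp
      · rw [hp, one_pow, show ((L : ℝ) / (L - 1)) ^ 2 * ((L - 1) / L) = L / (L - 1) by field_simp,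
          le_div_iff₀ hL1]
        linarith
      · rw [div_pow, div_lt_iff₀ (by positivity),
          show (1 + 4 / (L : ℝ)) * (L - 1) ^ 2 = (L + 4) * (L - 1) ^ 2 / L by field_simp,
          lt_div_iff₀ (by positivity)]
        nlinarith
  obtain ⟨Δ₀, hΔ₀⟩ := key
  refine ⟨Δ₀, fun V _ G _ Δ hmin hmax hΔ => ?_⟩
  have hdeg : ∀ v, {x | G.Adj v x}.ncard = G.degree v := by
    intro v
    rw [← SimpleGraph.card_neighborFinset_eq_degree, ← Set.ncard_coe_finset]
    congr 1
    ext x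
    simp
  obtain ⟨col, k, hcol, hlt, hk⟩ := hΔ₀ V G Δ
    (fun v => by rw [hdeg, ← hmin]; exact G.minDegree_le_degree v)
    (fun v => by rw [hdeg, ← hmax]; exact G.degree_le_maxDegree v) hΔ
  have hle : inclusionChromaticIndex G ≤ k := Nat.sInf_le ⟨col, hcol, fun e _ => hlt e⟩
  rw [show ((L + 1 : ℕ) : ℝ) - 1 = L by push_cast; ring]
  exact le_trans (by exact_mod_cast hle) hk
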